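/- Let d ≥ 1 and 0 < λ ≤ Λ, let F : Sym(d) → ℝ be uniformly (λ,Λ)-elliptic, and assume ᾱ ∈ (0,1) is such that for every β ∈ (0, ᾱ) there is C_β > 0 with the property that every viscosity solution w of F(D²w) = g(x) in B₁, with g continuous and bounded, satisfies ‖w‖_{C^{1,β}(B_{1/2})} ≤ C_β(‖w‖_{L∞(B₁)} + ‖g‖_{L∞(B₁)}). Let θ : cl(B₁) → ℝ be continuous with −1 < inf_{B₁} θ and θ(x) ≤ 0 for all x ∈ B₁, let f : B₁ → ℝ be continuous and bounded, and let u ∈ C(B₁) be a viscosity solution of |Du|^{θ(x)} F(D²u) = f(x) in B₁. Then for every β with 0 < β < ᾱ, u is locally of class C^{1,β} in B₁, i.e. for every compact K ⊂ B₁ the gradient Du exists and is β-Hölder continuous on K. -/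

import Mathlib

/-!
A solution `u` of `|Du|^θ F(D²u) = f` with `-1 ≤ θ ≤ 0` and `|f| ≤ K` satisfies
`|F(D²u)| ≤ K |Du|^(-θ) ≤ K (1 + |Du|)` in the viscosity sense (`singular_growth`). Test functions
with vanishing gradient are not covered by the equation; at such a point either the Hessian has
the sign that makes the inequality trivial, or the test function can be tilted along an eigenvector
so as to touch `u` nearby with a nonzero gradient (`exists_jet_ne_zero`, `subEq_of_ne_zero`).

The two inequalities do not exhibit `F(D²u)` as a continuous function of `x`, so the assumed
estimate does not apply to `u` itself. Instead `u` is approximated uniformly on each smaller ball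
(`exists_approx`) by bounded, globally Lipschitz solutions of `F(D²w) = (1 + |Dw|) h` on the whole
space, where `h` is a truncation of `(w - z)/ε` with `z` close to `u`, bounded independently of `ε`.
They come from Perron's method (`perron`), between barriers made of sup-convolutions of `±u` with
steep cones and of a cutoff penalty (`exists_upper_approx`, `exists_penalty`, `barrier_sub`).
Translation-invariance of `F` makes the Perron solution Lipschitz, so no comparison principle is
needed.

A Lipschitz `w` with `F(D²w)` bounded is `C¹`, being the uniform limit of solutions of
`F(D²v) = (v - w)/ε` (`c1_of_lipschitz`). Hence `(1 + |Dw|) h` is continuous and the assumed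
estimate does apply to `w`. On small balls, scaling (`Reg.scaled`) makes the factor in front of the
gradient term small, which gives `C^{1,β}` bounds depending only on the bounds for `w` and `h`
(`global_estimate`). Such bounds pass to the limit (`gradient_limit`, `local_estimate`).

Viscosity inequalities are handled through second-order jets (`SubEq`, `SupEq`), and most statements
about supersolutions follow from the one about subsolutions by the duality `X ↦ -F(-X)`.
-/

open Metric Set Filter
open scoped RealInnerProductSpace

noncomputable section

abbrev Euc (d : ℕ) := EuclideanSpace ℝ (Fin d)
abbrev Mat (d : ℕ) := Matrix (Fin d) (Fin d) ℝ

noncomputable def matOpNorm {n : Type*} [Fintype n] [DecidableEq n]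
    (M : Matrix n n ℝ) : ℝ := ‖Matrix.toEuclideanCLM (𝕜 := ℝ) M‖

def UniformlyElliptic {d : ℕ} (lam Lam : ℝ) (F : Mat d → ℝ) : Prop :=
  F 0 = 0 ∧ ∀ M N : Mat d, M.IsHermitian → N.PosSemidef →
    lam * matOpNorm N ≤ F (M + N) - F M ∧ F (M + N) - F M ≤ Lam * matOpNorm N

noncomputable def hessM {d : ℕ} (φ : Euc d → ℝ) (x : Euc d) : Mat d :=
  Matrix.of fun i j =>
    iteratedFDeriv ℝ 2 φ x ![EuclideanSpace.single i 1, EuclideanSpace.single j 1]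

def ViscSubSol {d : ℕ} (F : Mat d → ℝ) (θ f : Euc d → ℝ) (q : Euc d) (u : Euc d → ℝ) : Prop :=
  ∀ x₀ ∈ ball (0 : Euc d) 1, ∀ φ : Euc d → ℝ, ContDiffAt ℝ 2 φ x₀ →
    IsLocalMax (fun x => u x - φ x) x₀ → q + gradient φ x₀ ≠ 0 →
      f x₀ ≤ ‖q + gradient φ x₀‖ ^ (θ x₀) * F (hessM φ x₀)

def ViscSuperSol {d : ℕ} (F : Mat d → ℝ) (θ f : Euc d → ℝ) (q : Euc d) (u : Euc d → ℝ) : Prop :=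
  ∀ x₀ ∈ ball (0 : Euc d) 1, ∀ φ : Euc d → ℝ, ContDiffAt ℝ 2 φ x₀ →
    IsLocalMin (fun x => u x - φ x) x₀ → q + gradient φ x₀ ≠ 0 →
      ‖q + gradient φ x₀‖ ^ (θ x₀) * F (hessM φ x₀) ≤ f x₀

def ViscSol {d : ℕ} (F : Mat d → ℝ) (θ f : Euc d → ℝ) (q : Euc d) (u : Euc d → ℝ) : Prop :=
  ViscSubSol F θ f q u ∧ ViscSuperSol F θ f q u

def ViscSubSolPure {d : ℕ} (F : Mat d → ℝ) (g : Euc d → ℝ) (u : Euc d → ℝ)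
    (s : Set (Euc d)) : Prop :=
  ∀ x₀ ∈ s, ∀ φ : Euc d → ℝ, ContDiffAt ℝ 2 φ x₀ →
    IsLocalMax (fun x => u x - φ x) x₀ → g x₀ ≤ F (hessM φ x₀)

def ViscSuperSolPure {d : ℕ} (F : Mat d → ℝ) (g : Euc d → ℝ) (u : Euc d → ℝ)
    (s : Set (Euc d)) : Prop :=
  ∀ x₀ ∈ s, ∀ φ : Euc d → ℝ, ContDiffAt ℝ 2 φ x₀ →
    IsLocalMin (fun x => u x - φ x) x₀ → F (hessM φ x₀) ≤ g x₀

def ViscSolPure {d : ℕ} (F : Mat d → ℝ) (g : Euc d → ℝ) (u : Euc d → ℝ)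
    (s : Set (Euc d)) : Prop :=
  ViscSubSolPure F g u s ∧ ViscSuperSolPure F g u s

open Topology

/-! ### Quadratic forms and ellipticity -/

/-- The quadratic form `h ↦ ⟨h, X h⟩` of a matrix. -/
def qf {d : ℕ} (X : Mat d) (h : Euc d) : ℝ :=
  ⟪h, Matrix.toEuclideanCLM (𝕜 := ℝ) X h⟫

/-- The quadratic polynomial `h ↦ ⟨p, h⟩ + ½ ⟨h, X h⟩`. -/
def qpoly {d : ℕ} (p : Euc d) (X : Mat d) (h : Euc d) : ℝ := ⟪p, h⟫ + 1 / 2 * qf X h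

section qf
variable {d : ℕ}

lemma qf_add (X Y : Mat d) (h : Euc d) : qf (X + Y) h = qf X h + qf Y h := by
  simp [qf, inner_add_right]

lemma qf_neg (X : Mat d) (h : Euc d) : qf (-X) h = - qf X h := by
  simp [qf]

lemma qf_sub (X Y : Mat d) (h : Euc d) : qf (X - Y) h = qf X h - qf Y h := by
  simp [qf, inner_sub_right]

lemma qf_smul_one (c : ℝ) (h : Euc d) : qf (c • (1 : Mat d)) h = c * ‖h‖ ^ 2 := by
  simp [qf, inner_smul_right]

lemma qf_smul (X : Mat d) (t : ℝ) (h : Euc d) : qf X (t • h) = t ^ 2 * qf X h := by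
  simp [qf, inner_smul_left, inner_smul_right]; ring

lemma qf_zero_right (X : Mat d) : qf X 0 = 0 := by simp [qf]

lemma continuous_qf (X : Mat d) : Continuous (qf X) := by
  unfold qf; fun_prop

lemma op_symm {X : Mat d} (hX : X.IsHermitian) (v w : Euc d) :
    ⟪Matrix.toEuclideanCLM (𝕜 := ℝ) X v, w⟫ = ⟪v, Matrix.toEuclideanCLM (𝕜 := ℝ) X w⟫ :=
  (Matrix.isSymmetric_toEuclideanLin_iff.2 hX) v w

lemma qf_add_right {X : Mat d} (hX : X.IsHermitian) (v w : Euc d) :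
    qf X (v + w) = qf X v + 2 * ⟪Matrix.toEuclideanCLM (𝕜 := ℝ) X v, w⟫ + qf X w := by
  have h1 := op_symm hX v w
  have h2 := real_inner_comm w (Matrix.toEuclideanCLM (𝕜 := ℝ) X v)
  simp only [qf, map_add, inner_add_left, inner_add_right]
  linarith

lemma posSemidef_of_qf {X : Mat d} (hX : X.IsHermitian) (h : ∀ v, 0 ≤ qf X v) :
    X.PosSemidef := by
  refine Matrix.PosSemidef.of_dotProduct_mulVec_nonneg hX fun x => ?_
  have := h (WithLp.toLp 2 x)
  rw [qf, Matrix.inner_toEuclideanCLM] at this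
  simpa using this

lemma hermitian_smul_one (c : ℝ) : (c • (1 : Mat d)).IsHermitian := by
  simp [Matrix.IsHermitian]

lemma qpoly_zero (p : Euc d) (X : Mat d) : qpoly p X 0 = 0 := by
  simp [qpoly, qf_zero_right]

lemma qpoly_add_smul_one (p : Euc d) (X : Mat d) (c : ℝ) (h : Euc d) :
    qpoly p (X + c • 1) h = qpoly p X h + c / 2 * ‖h‖ ^ 2 := by
  simp only [qpoly, qf_add, qf_smul_one]; ring

lemma continuous_qpoly (p : Euc d) (X : Mat d) : Continuous (qpoly p X) := by
  have := continuous_qf X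
  unfold qpoly; fun_prop

lemma qpoly_neg (p : Euc d) (X : Mat d) (h : Euc d) : qpoly (-p) (-X) h = - qpoly p X h := by
  simp only [qpoly, qf_neg, inner_neg_left]; ring

lemma qpoly_add {X : Mat d} (hX : X.IsHermitian) (p v w : Euc d) :
    qpoly p X (v + w) =
      qpoly p X v + qpoly (p + Matrix.toEuclideanCLM (𝕜 := ℝ) X v) X w := by
  simp only [qpoly, qf_add_right hX, inner_add_right, inner_add_left]; ring

/-- If `⟨a, h⟩ + ½⟨h, Y h⟩ ≥ 0` near `h = 0` then `a = 0` and `Y ≥ 0`. -/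
lemma qpoly_nonneg {a : Euc d} {Y : Mat d} (h : ∀ᶠ v in 𝓝 (0 : Euc d), 0 ≤ qpoly a Y v) :
    a = 0 ∧ ∀ v, 0 ≤ qf Y v := by
  have key : ∀ v : Euc d, ∀ᶠ t in 𝓝 (0 : ℝ), 0 ≤ t * ⟪a, v⟫ + 1 / 2 * (t ^ 2 * qf Y v) := by
    intro v
    have ht : Tendsto (fun t : ℝ => t • v) (𝓝 0) (𝓝 (0 : Euc d)) := by
      have : Continuous (fun t : ℝ => t • v) := by fun_prop
      simpa using this.tendsto 0
    filter_upwards [ht.eventually h] with t ht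
    simpa [qpoly, qf_smul, inner_smul_right] using ht
  have ha : ∀ v, ⟪a, v⟫ ≤ 0 := by
    intro v
    by_contra hc
    push Not at hc
    have h1 : ∀ᶠ t in 𝓝[<] (0 : ℝ), 0 ≤ t * ⟪a, v⟫ + 1 / 2 * (t ^ 2 * qf Y v) :=
      (key v).filter_mono nhdsWithin_le_nhds
    have h2 : Tendsto (fun t : ℝ => ⟪a, v⟫ + 1 / 2 * (t * qf Y v)) (𝓝[<] 0) (𝓝 ⟪a, v⟫) := by
      have : Continuous (fun t : ℝ => ⟪a, v⟫ + 1 / 2 * (t * qf Y v)) := by fun_prop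
      have := this.tendsto 0
      simp only [zero_mul, mul_zero, add_zero] at this
      exact this.mono_left nhdsWithin_le_nhds
    have h3 := h2.eventually (lt_mem_nhds hc)
    obtain ⟨t, ⟨ht1, ht2⟩, ht3⟩ := ((h1.and h3).and self_mem_nhdsWithin).exists
    have ht3 : t < 0 := ht3
    nlinarith
  have ha0 : a = 0 := by
    have := ha a
    rw [real_inner_self_eq_norm_sq] at this
    exact norm_eq_zero.1 (by nlinarith [norm_nonneg a])
  refine ⟨ha0, fun v => ?_⟩
  have h1 : ∀ᶠ t in 𝓝[>] (0 : ℝ), 0 ≤ t * ⟪a, v⟫ + 1 / 2 * (t ^ 2 * qf Y v) :=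
    (key v).filter_mono nhdsWithin_le_nhds
  obtain ⟨t, ht, ht0⟩ := (h1.and self_mem_nhdsWithin).exists
  have ht0 : 0 < t := ht0
  rw [ha0, inner_zero_left, mul_zero, zero_add] at ht
  have : 0 ≤ t ^ 2 * qf Y v := by linarith
  exact nonneg_of_mul_nonneg_right this (by positivity)

end qf

/-- The two consequences of uniform ellipticity used below: monotonicity in the Löwner order, and
a Lipschitz bound along multiples of the identity. -/
structure Ell {d : ℕ} (Lam : ℝ) (F : Mat d → ℝ) : Prop where
  nonneg : 0 ≤ Lam
  mono : ∀ X Y : Mat d, X.IsHermitian → Y.IsHermitian → (∀ h, qf X h ≤ qf Y h) → F X ≤ F Y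
  lip : ∀ (X : Mat d) (c : ℝ), X.IsHermitian → 0 ≤ c → F (X + c • 1) ≤ F X + Lam * c

/-- The dual operator `X ↦ -F(-X)`, which exchanges sub- and supersolutions. -/
def dualF {d : ℕ} (F : Mat d → ℝ) : Mat d → ℝ := fun X => - F (-X)

lemma UniformlyElliptic.ell {d : ℕ} {lam Lam : ℝ} {F : Mat d → ℝ} (hlam : 0 < lam)
    (hlL : lam ≤ Lam) (hF : UniformlyElliptic lam Lam F) : Ell Lam F := by
  refine ⟨by linarith, fun X Y hX hY h => ?_, fun X c hX hc => ?_⟩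
  · have hp : (Y - X).PosSemidef := posSemidef_of_qf (hY.sub hX) fun v => by
      rw [qf_sub]; linarith [h v]
    have := (hF.2 X (Y - X) hX hp).1
    rw [add_sub_cancel] at this
    have h0 : 0 ≤ matOpNorm (Y - X) := norm_nonneg _
    nlinarith
  · have hp : (c • (1 : Mat d)).PosSemidef := posSemidef_of_qf (hermitian_smul_one c) fun v => by
      rw [qf_smul_one]; positivity
    have := (hF.2 X _ hX hp).2
    have h0 : matOpNorm (c • (1 : Mat d)) ≤ c := by
      unfold matOpNorm
      refine ContinuousLinearMap.opNorm_le_bound _ hc fun v => ?_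
      simp [norm_smul, abs_of_nonneg hc]
    nlinarith

lemma Ell.dual {d : ℕ} {Lam : ℝ} {F : Mat d → ℝ} (hF : Ell Lam F) : Ell Lam (dualF F) := by
  refine ⟨hF.nonneg, fun X Y hX hY h => ?_, fun X c hX hc => ?_⟩
  · have := hF.mono (-Y) (-X) hY.neg hX.neg fun v => by rw [qf_neg, qf_neg]; linarith [h v]
    simp only [dualF]; linarith
  · have := hF.lip (-(X + c • 1)) c (hX.add (hermitian_smul_one c)).neg hc
    simp only [dualF]
    rw [show -(X + c • (1 : Mat d)) + c • 1 = -X by abel] at this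
    linarith

/-! ### Second-order jets and viscosity inequalities -/

/-- `(p, X)` is a second-order superjet of `u` at `x`: the polynomial
`u x + ⟨p, y - x⟩ + ½⟨y - x, X (y - x)⟩` lies above `u` near `x`. -/
def JetAbove {d : ℕ} (u : Euc d → ℝ) (x p : Euc d) (X : Mat d) : Prop :=
  X.IsHermitian ∧ ∀ᶠ y in 𝓝 x, u y ≤ u x + qpoly p X (y - x)

/-- `(p, X)` is a second-order subjet of `u` at `x`. -/
def JetBelow {d : ℕ} (u : Euc d → ℝ) (x p : Euc d) (X : Mat d) : Prop :=
  X.IsHermitian ∧ ∀ᶠ y in 𝓝 x, u x + qpoly p X (y - x) ≤ u y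

/-- `F(D²u) ≥ Q(x, u, Du)` on `s`, in the viscosity sense expressed through superjets. -/
def SubEq {d : ℕ} (F : Mat d → ℝ) (Q : Euc d → ℝ → Euc d → ℝ) (u : Euc d → ℝ)
    (s : Set (Euc d)) : Prop :=
  ∀ x ∈ s, ∀ p X, JetAbove u x p X → Q x (u x) p ≤ F X

/-- `F(D²u) ≤ Q(x, u, Du)` on `s`, in the viscosity sense expressed through subjets. -/
def SupEq {d : ℕ} (F : Mat d → ℝ) (Q : Euc d → ℝ → Euc d → ℝ) (u : Euc d → ℝ)
    (s : Set (Euc d)) : Prop :=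
  ∀ x ∈ s, ∀ p X, JetBelow u x p X → F X ≤ Q x (u x) p

section jets
variable {d : ℕ}

lemma jetAbove_neg {u : Euc d → ℝ} {x p : Euc d} {X : Mat d} :
    JetAbove (fun y => - u y) x p X ↔ JetBelow u x (-p) (-X) := by
  unfold JetAbove JetBelow
  refine and_congr ⟨fun h => h.neg, fun h => by simpa using h.neg⟩ (eventually_congr ?_)
  refine Eventually.of_forall fun y => ?_
  rw [qpoly_neg]
  constructor <;> intro h <;> linarith

lemma jetBelow_neg {u : Euc d → ℝ} {x p : Euc d} {X : Mat d} :
    JetBelow (fun y => - u y) x p X ↔ JetAbove u x (-p) (-X) := by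
  have := jetAbove_neg (u := fun y => - u y) (x := x) (p := -p) (X := -X)
  simp only [neg_neg] at this
  exact this.symm

lemma supEq_iff_dual {F : Mat d → ℝ} {Q : Euc d → ℝ → Euc d → ℝ} {u : Euc d → ℝ}
    {s : Set (Euc d)} :
    SupEq F Q u s ↔
      SubEq (dualF F) (fun x r p => - Q x (-r) (-p)) (fun y => - u y) s := by
  constructor
  · intro h x hx p X hj
    have := h x hx _ _ (jetAbove_neg.1 hj)
    simp only [dualF, neg_neg]; linarith
  · intro h x hx p X hj
    have := h x hx (-p) (-X) (jetAbove_neg.2 (by simpa using hj))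
    simp only [dualF, neg_neg] at this; linarith

lemma JetAbove.congr_le {u v : Euc d → ℝ} {x p : Euc d} {X : Mat d} (h : JetAbove v x p X)
    (hle : ∀ᶠ y in 𝓝 x, u y ≤ v y) (heq : u x = v x) : JetAbove u x p X :=
  ⟨h.1, by filter_upwards [h.2, hle] with y h1 h2; rw [heq]; linarith⟩

/-- Translating the base point of an eventual statement. -/
lemma eventually_sub_nhds {P : Euc d → Prop} {x : Euc d} :
    (∀ᶠ y in 𝓝 x, P (y - x)) ↔ ∀ᶠ h in 𝓝 (0 : Euc d), P h := by
  have h1 : Tendsto (fun y => y - x) (𝓝 x) (𝓝 0) := by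
    have : Continuous (fun y : Euc d => y - x) := by fun_prop
    simpa using this.tendsto x
  have h2 : Tendsto (fun h => h + x) (𝓝 (0 : Euc d)) (𝓝 x) := by
    have : Continuous (fun y : Euc d => y + x) := by fun_prop
    simpa using this.tendsto 0
  constructor
  · intro h
    filter_upwards [h2.eventually h] with y hy; simpa using hy
  · intro h; exact h1.eventually h

/-- Comparison of a superjet with a polynomial touching at the same point. -/
lemma jet_compare {u : Euc d → ℝ} {x p p' : Euc d} {X X' : Mat d}
    (h : ∀ᶠ y in 𝓝 x, u x + qpoly p' X' (y - x) ≤ u y) (hj : JetAbove u x p X) :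
    p = p' ∧ ∀ v, qf X' v ≤ qf X v := by
  have h1 : ∀ᶠ y in 𝓝 x, 0 ≤ qpoly (p - p') (X - X') (y - x) := by
    filter_upwards [h, hj.2] with y h1 h2
    simp only [qpoly, qf_sub, inner_sub_left] at *
    linarith
  obtain ⟨h2, h3⟩ := qpoly_nonneg
    ((eventually_sub_nhds (P := fun h => 0 ≤ qpoly (p - p') (X - X') h)).1 h1)
  refine ⟨sub_eq_zero.1 h2, fun v => ?_⟩
  have := h3 v
  rw [qf_sub] at this; linarith

end jets

/-! ### Perron's method with translation-invariance -/

section perron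
variable {d : ℕ}

lemma SubEq.max {F : Mat d → ℝ} {Q : Euc d → ℝ → Euc d → ℝ} {a b : Euc d → ℝ}
    {s : Set (Euc d)} (ha : SubEq F Q a s) (hb : SubEq F Q b s) :
    SubEq F Q (fun x => max (a x) (b x)) s := by
  intro x hx p X hj
  rcases le_total (b x) (a x) with h | h
  · have := ha x hx p X (hj.congr_le (Eventually.of_forall fun y => le_max_left _ _)
      (max_eq_left h).symm)
    simpa only [max_eq_left h] using this
  · have := hb x hx p X (hj.congr_le (Eventually.of_forall fun y => le_max_right _ _)
      (max_eq_right h).symm)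
    simpa only [max_eq_right h] using this

/-- If a quadratic polynomial centred at `x₀` touches `v` from above, up to a constant, at another
point `x₁`, its Taylor coefficients at `x₁` form a superjet of `v`. -/
lemma jetAbove_shift {v : Euc d → ℝ} {x₀ x₁ p : Euc d} {X : Mat d} (hX : X.IsHermitian)
    (h : ∀ᶠ y in 𝓝 x₁, v y - qpoly p X (y - x₀) ≤ v x₁ - qpoly p X (x₁ - x₀)) :
    JetAbove v x₁ (p + Matrix.toEuclideanCLM (𝕜 := ℝ) X (x₁ - x₀)) X := by
  refine ⟨hX, ?_⟩
  filter_upwards [h] with y hy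
  have := qpoly_add hX p (x₁ - x₀) (y - x₁)
  rw [show x₁ - x₀ + (y - x₁) = y - x₀ by abel] at this
  linarith

/-- The pointwise supremum `w` of a family of continuous subsolutions is a subsolution. -/
lemma subEq_sup {Lam : ℝ} {F : Mat d → ℝ} (hF : Ell Lam F) {Q : Euc d → ℝ → Euc d → ℝ}
    (hQc : Continuous fun t : Euc d × ℝ × Euc d => Q t.1 t.2.1 t.2.2)
    (hQm : ∀ x p r r', r ≤ r' → Q x r p ≤ Q x r' p) {S : Set (Euc d → ℝ)} {w : Euc d → ℝ}
    (hS : ∀ v ∈ S, Continuous v ∧ SubEq F Q v univ) (hle : ∀ v ∈ S, ∀ x, v x ≤ w x)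
    (happ : ∀ x, ∀ δ > 0, ∃ v ∈ S, w x - δ < v x) : SubEq F Q w univ := by
  intro x₀ _ p X hj
  obtain ⟨hX, hj⟩ := hj
  obtain ⟨ρ, hρ, hball⟩ := Metric.eventually_nhds_iff_ball.1 hj
  -- it suffices to prove the inequality for the strictly touching matrix `X + 2γ`
  suffices hγ : ∀ γ : ℝ, 0 < γ → Q x₀ (w x₀) p ≤ F (X + (2 * γ) • 1) by
    have h1 : ∀ γ : ℝ, 0 < γ → Q x₀ (w x₀) p ≤ F X + Lam * (2 * γ) := fun γ hg =>
      (hγ γ hg).trans (hF.lip X (2 * γ) hX (by positivity))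
    have h2 : Tendsto (fun γ : ℝ => F X + Lam * (2 * γ)) (𝓝[>] 0) (𝓝 (F X)) := by
      have : Continuous (fun γ : ℝ => F X + Lam * (2 * γ)) := by fun_prop
      have := this.tendsto 0
      simp only [mul_zero, add_zero] at this
      exact this.mono_left nhdsWithin_le_nhds
    exact ge_of_tendsto h2 (by filter_upwards [self_mem_nhdsWithin] with γ hg using h1 γ hg)
  intro γ hγ
  set Y : Mat d := X + (2 * γ) • 1 with hY
  have hYh : Y.IsHermitian := hX.add (hermitian_smul_one _)
  have key : ∀ δ > 0, δ < γ * (ρ / 2) ^ 2 → ∃ x₁ : Euc d, γ * ‖x₁ - x₀‖ ^ 2 ≤ δ ∧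
      Q x₁ (w x₀ + qpoly p Y (x₁ - x₀) - δ)
        (p + Matrix.toEuclideanCLM (𝕜 := ℝ) Y (x₁ - x₀)) ≤ F Y := by
    intro δ hδ hδρ
    obtain ⟨v, hvS, hv⟩ := happ x₀ δ hδ
    obtain ⟨hvc, hvs⟩ := hS v hvS
    obtain ⟨x₁, hx₁, hmax⟩ := (isCompact_closedBall x₀ (ρ / 2)).exists_isMaxOn
      ⟨x₀, mem_closedBall_self (by positivity)⟩
      (f := fun y => v y - qpoly p Y (y - x₀))
      ((hvc.sub ((continuous_qpoly p Y).comp (by fun_prop))).continuousOn)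
    have hm0 := hmax (mem_closedBall_self (by positivity : 0 ≤ ρ / 2) : x₀ ∈ _)
    simp only [mem_ofPred_eq, sub_self, qpoly_zero] at hm0
    have hb := hball x₁ (mem_ball.2 ((mem_closedBall.1 hx₁).trans_lt (by linarith)))
    have hwv := hle v hvS x₁
    have hq : qpoly p Y (x₁ - x₀) = qpoly p X (x₁ - x₀) + γ * ‖x₁ - x₀‖ ^ 2 := by
      rw [hY, qpoly_add_smul_one]; ring
    have hdist : γ * ‖x₁ - x₀‖ ^ 2 ≤ δ := by linarith
    refine ⟨x₁, hdist, ?_⟩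
    have hlt : x₁ ∈ ball x₀ (ρ / 2) := by
      rw [mem_ball, dist_eq_norm]
      have : ‖x₁ - x₀‖ ^ 2 < (ρ / 2) ^ 2 := by
        by_contra hc
        push Not at hc
        nlinarith
      exact lt_of_pow_lt_pow_left₀ 2 (by positivity) this
    have hjet := jetAbove_shift (v := v) (x₀ := x₀) (x₁ := x₁) (p := p) hYh (by
      filter_upwards [isOpen_ball.mem_nhds hlt] with y hy using hmax (ball_subset_closedBall hy))
    refine le_trans (hQm _ _ _ _ ?_) (hvs x₁ (mem_univ _) _ _ hjet)
    linarith
  -- let `δ → 0`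
  have hpos : 0 < γ * (ρ / 2) ^ 2 := by positivity
  have hev : ∀ᶠ δ in 𝓝[>] (0 : ℝ), 0 < δ ∧ δ < γ * (ρ / 2) ^ 2 :=
    Ioo_mem_nhdsGT hpos
  choose! g hg1 hg2 using key
  have hgt : Tendsto g (𝓝[>] 0) (𝓝 x₀) := by
    rw [tendsto_iff_norm_sub_tendsto_zero]
    have h1 : Tendsto (fun δ : ℝ => √(δ / γ)) (𝓝[>] 0) (𝓝 0) := by
      have : Continuous (fun δ : ℝ => √(δ / γ)) := by fun_prop
      have := this.tendsto 0
      simp only [zero_div, Real.sqrt_zero] at this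
      exact this.mono_left nhdsWithin_le_nhds
    refine squeeze_zero' (Eventually.of_forall fun _ => norm_nonneg _) ?_ h1
    filter_upwards [hev] with δ hδ
    refine Real.le_sqrt_of_sq_le ?_
    rw [le_div_iff₀ hγ]
    linarith [hg1 δ hδ.1 hδ.2]
  have hid : Tendsto (fun δ : ℝ => δ) (𝓝[>] 0) (𝓝 0) := nhdsWithin_le_nhds
  have hlim : Tendsto (fun δ => Q (g δ) (w x₀ + qpoly p Y (g δ - x₀) - δ)
      (p + Matrix.toEuclideanCLM (𝕜 := ℝ) Y (g δ - x₀))) (𝓝[>] 0) (𝓝 (Q x₀ (w x₀) p)) := by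
    have hsub : Tendsto (fun δ => g δ - x₀) (𝓝[>] 0) (𝓝 0) := by
      simpa using hgt.sub_const x₀
    have h1 : Tendsto (fun δ => w x₀ + qpoly p Y (g δ - x₀) - δ) (𝓝[>] 0) (𝓝 (w x₀)) := by
      have := (((continuous_qpoly p Y).tendsto 0).comp hsub).const_add (w x₀) |>.sub hid
      simpa [qpoly_zero] using this
    have h2 : Tendsto (fun δ => p + Matrix.toEuclideanCLM (𝕜 := ℝ) Y (g δ - x₀)) (𝓝[>] 0)
        (𝓝 p) := by
      have := (((Matrix.toEuclideanCLM (𝕜 := ℝ) Y).continuous.tendsto 0).comp hsub).const_add p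
      simpa using this
    exact (hQc.tendsto (x₀, w x₀, p)).comp (hgt.prodMk_nhds (h1.prodMk_nhds h2))
  refine le_of_tendsto hlim ?_
  filter_upwards [hev] with δ hδ using hg2 δ hδ.1 hδ.2

set_option maxHeartbeats 1000000 in
/-- The bump step of Perron's method: a continuous subsolution `w` lying below a supersolution `V`
which fails to be a supersolution itself can be enlarged. -/
lemma perron_bump {Lam : ℝ} {F : Mat d → ℝ} (hF : Ell Lam F) {Q : Euc d → ℝ → Euc d → ℝ}
    (hQc : Continuous fun t : Euc d × ℝ × Euc d => Q t.1 t.2.1 t.2.2)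
    {w V : Euc d → ℝ} (hwc : Continuous w) (hVc : Continuous V) (hwV : ∀ x, w x ≤ V x)
    (hws : SubEq F Q w univ) (hVs : SupEq F Q V univ)
    {x₀ p : Euc d} {X : Mat d} (hj : JetBelow w x₀ p X) (hlt : Q x₀ (w x₀) p < F X) :
    ∃ v : Euc d → ℝ, Continuous v ∧ (∀ x, w x ≤ v x) ∧ (∀ x, v x ≤ V x) ∧
      SubEq F Q v univ ∧ w x₀ < v x₀ := by
  have hX := hj.1
  have hwV0 : w x₀ < V x₀ := by
    refine lt_of_le_of_ne (hwV x₀) fun heq => ?_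
    have : JetBelow V x₀ p X := by
      refine ⟨hX, ?_⟩
      filter_upwards [hj.2] with y hy
      rw [← heq]; exact hy.trans (hwV y)
    have := hVs x₀ (mem_univ _) p X this
    rw [← heq] at this
    linarith
  -- lower the Hessian by `2γ`, keeping a strict inequality
  obtain ⟨γ, hγ, hγ2⟩ : ∃ γ : ℝ, 0 < γ ∧ Q x₀ (w x₀) p < F (X - (2 * γ) • 1) := by
    have hL := hF.nonneg
    refine ⟨(F X - Q x₀ (w x₀) p) / (4 * (Lam + 1)), by
      have : 0 < F X - Q x₀ (w x₀) p := by linarith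
      positivity, ?_⟩
    set γ := (F X - Q x₀ (w x₀) p) / (4 * (Lam + 1)) with hγ
    have h1 : γ * (4 * (Lam + 1)) = F X - Q x₀ (w x₀) p := by
      rw [hγ]; field_simp
    have h2 : 0 < γ := by
      have : 0 < F X - Q x₀ (w x₀) p := by linarith
      rw [hγ]; positivity
    have h3 := hF.lip (X - (2 * γ) • 1) (2 * γ) (hX.sub (hermitian_smul_one _)) (by positivity)
    rw [sub_add_cancel] at h3
    nlinarith
  set Y : Mat d := X - (2 * γ) • 1 with hY
  have hYh : Y.IsHermitian := hX.sub (hermitian_smul_one _)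
  have hq : ∀ h, qpoly p Y h = qpoly p X h - γ * ‖h‖ ^ 2 := by
    intro h
    have := qpoly_add_smul_one p X (-(2 * γ)) h
    rw [neg_smul, ← sub_eq_add_neg] at this
    rw [hY, this]; ring
  set P : ℝ → Euc d → ℝ := fun δ y => w x₀ + qpoly p Y (y - x₀) + δ with hP
  have hPc : Continuous fun t : ℝ × Euc d => P t.1 t.2 := by
    have := continuous_qpoly p Y
    simp only [hP]; fun_prop
  have hP0 : P 0 x₀ = w x₀ := by simp [hP, qpoly_zero]
  -- all requirements hold for `(δ, y)` close to `(0, x₀)`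
  have hev1 : ∀ᶠ t : ℝ × Euc d in 𝓝 (0, x₀), P t.1 t.2 < V t.2 := by
    refine hPc.continuousAt.eventually_lt (hVc.comp continuous_snd).continuousAt ?_
    simpa [hP0] using hwV0
  have hev2 : ∀ᶠ t : ℝ × Euc d in 𝓝 (0, x₀),
      Q t.2 (P t.1 t.2) (p + Matrix.toEuclideanCLM (𝕜 := ℝ) Y (t.2 - x₀)) < F Y := by
    have hc : Continuous fun t : ℝ × Euc d =>
        Q t.2 (P t.1 t.2) (p + Matrix.toEuclideanCLM (𝕜 := ℝ) Y (t.2 - x₀)) :=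
      hQc.comp (continuous_snd.prodMk (hPc.prodMk (by fun_prop)))
    refine hc.continuousAt.eventually_lt continuousAt_const ?_
    simpa [hP0] using hγ2
  have hev3 : ∀ᶠ t : ℝ × Euc d in 𝓝 (0, x₀), w x₀ + qpoly p X (t.2 - x₀) ≤ w t.2 :=
    (continuous_snd.tendsto ((0 : ℝ), x₀)).eventually hj.2
  obtain ⟨ρ, hρ, hball⟩ := Metric.eventually_nhds_iff_ball.1 (hev1.and (hev2.and hev3))
  set r := ρ / 2 with hr
  have hr0 : 0 < r := by positivity
  obtain ⟨δ, hδ, hδρ, hδr⟩ : ∃ δ > 0, δ < ρ ∧ δ < γ * (r / 2) ^ 2 := by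
    have hpos : 0 < γ * (r / 2) ^ 2 := by positivity
    refine ⟨min ρ (γ * (r / 2) ^ 2) / 2, by positivity, ?_, ?_⟩
    · linarith [min_le_left ρ (γ * (r / 2) ^ 2)]
    · linarith [min_le_right ρ (γ * (r / 2) ^ 2)]
  have hin : ∀ y ∈ ball x₀ ρ, P δ y < V y ∧
      Q y (P δ y) (p + Matrix.toEuclideanCLM (𝕜 := ℝ) Y (y - x₀)) < F Y ∧
      w x₀ + qpoly p X (y - x₀) ≤ w y := by
    intro y hy
    refine hball (δ, y) ?_
    rw [mem_ball, Prod.dist_eq, max_lt_iff]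
    refine ⟨?_, hy⟩
    simpa [abs_of_pos hδ] using hδρ
  -- away from `x₀` the polynomial is below `w`
  have hout : ∀ y ∈ ball x₀ ρ, r / 2 ≤ ‖y - x₀‖ → P δ y ≤ w y := by
    intro y hy hyr
    have h1 := (hin y hy).2.2
    have h2 : (r / 2) ^ 2 ≤ ‖y - x₀‖ ^ 2 := by gcongr
    have h3 := hq (y - x₀)
    simp only [hP]
    nlinarith
  classical
  set v : Euc d → ℝ := fun y => if y ∈ ball x₀ r then max (w y) (P δ y) else w y with hv
  have hrρ : r < ρ := by rw [hr]; linarith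
  have hPδ : Continuous (P δ) := hPc.comp (by fun_prop : Continuous fun y : Euc d => (δ, y))
  have hloc1 : ∀ y ∈ ball x₀ r, v =ᶠ[𝓝 y] fun z => max (w z) (P δ z) := by
    intro y hy
    filter_upwards [isOpen_ball.mem_nhds hy] with z hz
    simp only [hv, if_pos hz]
  have hloc2 : ∀ y, y ∉ ball x₀ r → v =ᶠ[𝓝 y] w := by
    intro y hy
    have hyr : r / 2 < ‖y - x₀‖ := by
      rw [mem_ball, dist_eq_norm, not_lt] at hy; linarith
    have : ∀ᶠ z in 𝓝 y, r / 2 < ‖z - x₀‖ :=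
      (by fun_prop : Continuous fun z : Euc d => ‖z - x₀‖).continuousAt.eventually
        (lt_mem_nhds hyr)
    filter_upwards [this] with z hz
    simp only [hv]
    split_ifs with hzr
    · exact max_eq_left (hout z (ball_subset_ball hrρ.le hzr) hz.le)
    · rfl
  refine ⟨v, ?_, ?_, ?_, ?_, ?_⟩
  · rw [continuous_iff_continuousAt]
    intro y
    by_cases hy : y ∈ ball x₀ r
    · exact (hwc.max hPδ).continuousAt.congr (hloc1 y hy).symm
    · exact hwc.continuousAt.congr (hloc2 y hy).symm
  · intro y
    simp only [hv]; split_ifs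
    · exact le_max_left _ _
    · exact le_rfl
  · intro y
    simp only [hv]; split_ifs with hy
    · exact max_le (hwV y) (hin y (ball_subset_ball hrρ.le hy)).1.le
    · exact hwV y
  · intro y _ q Z hjet
    have hcase : ∀ a : Euc d → ℝ, v y = a y → (∀ᶠ z in 𝓝 y, a z ≤ v z) → JetAbove a y q Z :=
      fun a h1 h2 => hjet.congr_le h2 h1.symm
    by_cases hy : y ∈ ball x₀ r
    · have hvy : v y = max (w y) (P δ y) := (hloc1 y hy).self_of_nhds
      rcases le_total (P δ y) (w y) with hle | hle
      · rw [max_eq_left hle] at hvy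
        rw [hvy]
        refine hws y (mem_univ _) q Z (hcase w hvy ?_)
        filter_upwards [hloc1 y hy] with z hz
        rw [hz]; exact le_max_left _ _
      · rw [max_eq_right hle] at hvy
        have hjP : JetAbove (P δ) y q Z := by
          refine hcase _ hvy ?_
          filter_upwards [hloc1 y hy] with z hz
          rw [hz]; exact le_max_right _ _
        obtain ⟨hq1, hq2⟩ := jet_compare (p' := p + Matrix.toEuclideanCLM (𝕜 := ℝ) Y (y - x₀))
          (X' := Y) (Eventually.of_forall fun z => by
            have := qpoly_add hYh p (y - x₀) (z - y)
            rw [show y - x₀ + (z - y) = z - x₀ by abel] at this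
            simp only [hP]; linarith) hjP
        rw [hvy, hq1]
        exact (hin y (ball_subset_ball hrρ.le hy)).2.1.le.trans
          (hF.mono Y Z hYh hjet.1 hq2)
    · have h := hloc2 y hy
      rw [h.self_of_nhds]
      refine hws y (mem_univ _) q Z (hcase w h.self_of_nhds ?_)
      filter_upwards [h] with z hz using hz.ge
  · have : v x₀ = max (w x₀) (P δ x₀) := (hloc1 x₀ (mem_ball_self hr0)).self_of_nhds
    rw [this]
    refine lt_of_lt_of_le ?_ (le_max_right _ _)
    simp only [hP, sub_self, qpoly_zero]; linarith

/-- Existence of a Lipschitz viscosity solution between continuous barriers, the upper one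
Lipschitz, on the whole space.
No comparison principle is needed: the translates of a subsolution are subsolutions, after
subtracting `L‖h‖`, so that the largest subsolution is automatically `L`-Lipschitz. -/
theorem perron {Lam : ℝ} {F : Mat d → ℝ} (hF : Ell Lam F) {Q : Euc d → ℝ → Euc d → ℝ}
    (hQc : Continuous fun t : Euc d × ℝ × Euc d => Q t.1 t.2.1 t.2.2)
    (hQm : ∀ x p r r', r ≤ r' → Q x r p ≤ Q x r' p) {L : ℝ}
    (hQt : ∀ x h r p, Q x r p ≤ Q (x + h) (r + L * ‖h‖) p)
    {U V : Euc d → ℝ} (hV : ∀ x y, V x - V y ≤ L * ‖x - y‖)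
    (hUc : Continuous U) (hVc : Continuous V)
    (hUV : ∀ x, U x ≤ V x) (hUs : SubEq F Q U univ) (hVs : SupEq F Q V univ) :
    ∃ w : Euc d → ℝ, (∀ x y, w x - w y ≤ L * ‖x - y‖) ∧ (∀ x, U x ≤ w x) ∧ (∀ x, w x ≤ V x) ∧
      SubEq F Q w univ ∧ SupEq F Q w univ := by
  set S : Set (Euc d → ℝ) := {v | (Continuous v ∧ SubEq F Q v univ) ∧
    (∀ x, U x ≤ v x) ∧ ∀ x, v x ≤ V x} with hS
  have hUS : U ∈ S := ⟨⟨hUc, hUs⟩, fun _ => le_rfl, hUV⟩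
  set w : Euc d → ℝ := fun x => sSup ((fun v : Euc d → ℝ => v x) '' S) with hw
  have hbdd : ∀ x, BddAbove ((fun v : Euc d → ℝ => v x) '' S) := by
    rintro x
    refine ⟨V x, ?_⟩
    rintro _ ⟨v, hv, rfl⟩
    exact hv.2.2 x
  have hle : ∀ v ∈ S, ∀ x, v x ≤ w x := fun v hv x => le_csSup (hbdd x) ⟨v, hv, rfl⟩
  have hwV : ∀ x, w x ≤ V x := fun x => csSup_le ⟨_, U, hUS, rfl⟩ (by
    rintro _ ⟨v, hv, rfl⟩; exact hv.2.2 x)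
  have happ : ∀ x, ∀ δ > 0, ∃ v ∈ S, w x - δ < v x := by
    intro x δ hδ
    obtain ⟨_, ⟨v, hv, rfl⟩, h⟩ := exists_lt_of_lt_csSup
      (⟨_, U, hUS, rfl⟩ : ((fun v : Euc d → ℝ => v x) '' S).Nonempty)
      (show w x - δ < sSup ((fun v : Euc d → ℝ => v x) '' S) by linarith)
    exact ⟨v, hv, h⟩
  have hlip : ∀ x y, w x - w y ≤ L * ‖x - y‖ := by
    intro x y
    suffices h : ∀ v ∈ S, v x - L * ‖x - y‖ ≤ w y by
      refine le_of_forall_pos_le_add fun δ hδ => ?_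
      obtain ⟨v, hv, h1⟩ := happ x δ hδ
      linarith [h v hv]
    intro v hv
    set h := x - y with hh
    set v' : Euc d → ℝ := fun z => v (z + h) - L * ‖h‖ with hv'
    have hv's : SubEq F Q v' univ := by
      intro z _ p X hj
      have hj' : JetAbove v (z + h) p X := by
        refine ⟨hj.1, ?_⟩
        have ht : Tendsto (fun y => y - h) (𝓝 (z + h)) (𝓝 z) := by
          have : Continuous (fun y : Euc d => y - h) := by fun_prop
          simpa using this.tendsto (z + h)
        filter_upwards [ht.eventually hj.2] with y hy
        simp only [hv', sub_add_cancel] at hy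
        rw [show y - (z + h) = y - h - z by abel]
        linarith
      have h1 := hv.1.2 (z + h) (mem_univ _) p X hj'
      refine le_trans ?_ h1
      have := hQt z h (v' z) p
      simpa [hv'] using this
    have hmem : (fun z => max (U z) (v' z)) ∈ S := by
      refine ⟨⟨hUc.max ?_, hUs.max hv's⟩, fun z => le_max_left _ _, fun z => max_le (hUV z) ?_⟩
      · have := hv.1.1
        simp only [hv']; fun_prop
      · have h1 := hv.2.2 (z + h)
        have h2 := hV (z + h) z
        rw [add_sub_cancel_left] at h2
        simp only [hv']; linarith
    have := (le_max_right _ _).trans (hle _ hmem y)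
    simpa [hv', hh] using this
  have hwc : Continuous w := by
    have : LipschitzWith (Real.toNNReal L) w := LipschitzWith.of_le_add_mul' L fun x y => by
      rw [dist_eq_norm]; linarith [hlip x y]
    exact this.continuous
  have hws : SubEq F Q w univ := subEq_sup hF hQc hQm (fun v hv => hv.1) hle happ
  have hUw : ∀ x, U x ≤ w x := hle U hUS
  refine ⟨w, hlip, hUw, hwV, hws, ?_⟩
  intro x₀ _ p X hj
  by_contra hc
  push Not at hc
  obtain ⟨v, hvc, hwv, hvV, hvs, hv0⟩ := perron_bump hF hQc hwc hVc hwV hws hVs hj hc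
  have := hle v ⟨⟨hvc, hvs⟩, fun x => (hUw x).trans (hwv x), hvV⟩ x₀
  linarith

end perron

/-! ### Test functions and jets -/

section calculus
variable {d : ℕ}

lemma inner_single_op (X : Mat d) (i j : Fin d) :
    ⟪(EuclideanSpace.single i 1 : Euc d), Matrix.toEuclideanCLM (𝕜 := ℝ) X
      (EuclideanSpace.single j 1)⟫ = X i j := by
  rw [Matrix.inner_toEuclideanCLM]
  simp

lemma bilin_eq_inner (B : Euc d →L[ℝ] Euc d →L[ℝ] ℝ) (v w : Euc d) :
    B v w = ⟪v, Matrix.toEuclideanCLM (𝕜 := ℝ) (Matrix.of fun i j =>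
      B (EuclideanSpace.single i 1) (EuclideanSpace.single j 1)) w⟫ := by
  have hdec : ∀ z : Euc d, z = ∑ i, z i • (EuclideanSpace.single i (1 : ℝ) : Euc d) := by
    intro z
    have := (EuclideanSpace.basisFun (Fin d) ℝ).sum_repr z
    simpa using this.symm
  conv_rhs => rw [hdec v, hdec w]
  conv_lhs => rw [hdec v, hdec w]
  simp only [map_sum, map_smul, sum_apply, smul_apply,
    sum_inner, inner_sum, real_inner_smul_left, real_inner_smul_right, inner_single_op,
    Matrix.of_apply, smul_eq_mul, Finset.mul_sum]

lemma hasFDerivAt_qpoly {X : Mat d} (hX : X.IsHermitian) (p x₀ y : Euc d) :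
    HasFDerivAt (fun z => qpoly p X (z - x₀))
      (innerSL ℝ (p + Matrix.toEuclideanCLM (𝕜 := ℝ) X (y - x₀))) y := by
  have h0 : HasFDerivAt (fun z : Euc d => z - x₀) (ContinuousLinearMap.id ℝ (Euc d)) y :=
    (hasFDerivAt_id y).sub_const x₀
  have h1 := (hasFDerivAt_const p y).inner ℝ h0
  have h2 := h0.inner ℝ ((Matrix.toEuclideanCLM (𝕜 := ℝ) X).hasFDerivAt.comp y h0)
  have h3 := h1.add (h2.const_mul (1 / 2))
  refine h3.congr_fderiv ?_
  ext v
  have hs := op_symm hX (y - x₀) v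
  have hc := real_inner_comm v (Matrix.toEuclideanCLM (𝕜 := ℝ) X (y - x₀))
  simp [fderivInnerCLM_apply] at hs hc ⊢
  rw [← inner_sub_left, ← hs, ← hc]; ring

lemma contDiff_qpoly (p x₀ : Euc d) (X : Mat d) :
    ContDiff ℝ 2 (fun z => qpoly p X (z - x₀)) := by
  unfold qpoly qf
  have h : ContDiff ℝ 2 (fun z : Euc d => z - x₀) := by fun_prop
  exact (contDiff_const.inner ℝ h).add (contDiff_const.mul
    (h.inner ℝ ((Matrix.toEuclideanCLM (𝕜 := ℝ) X).contDiff.comp h)))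

lemma gradient_qpoly {X : Mat d} (hX : X.IsHermitian) (p x₀ : Euc d) :
    gradient (fun z => qpoly p X (z - x₀)) x₀ = p := by
  refine HasGradientAt.gradient ?_
  rw [hasGradientAt_iff_hasFDerivAt]
  refine (hasFDerivAt_qpoly hX p x₀ x₀).congr_fderiv ?_
  ext v; simp

lemma hessM_qpoly {X : Mat d} (hX : X.IsHermitian) (p x₀ : Euc d) :
    hessM (fun z => qpoly p X (z - x₀)) x₀ = X := by
  have h1 : fderiv ℝ (fun z => qpoly p X (z - x₀)) =
      fun y => innerSL ℝ (p + Matrix.toEuclideanCLM (𝕜 := ℝ) X (y - x₀)) :=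
    funext fun y => (hasFDerivAt_qpoly hX p x₀ y).fderiv
  set B : Euc d →L[ℝ] (Euc d →L[ℝ] ℝ) :=
    (innerSL ℝ : Euc d →L[ℝ] (Euc d →L[ℝ] ℝ)).comp (Matrix.toEuclideanCLM (𝕜 := ℝ) X) with hB
  have h1' : fderiv ℝ (fun z => qpoly p X (z - x₀)) =
      fun y => B y + innerSL ℝ (p - Matrix.toEuclideanCLM (𝕜 := ℝ) X x₀) := by
    rw [h1]
    funext y
    ext v
    simp [hB]
    ring
  have h2 : HasFDerivAt (fun y => B y + innerSL ℝ (p - Matrix.toEuclideanCLM (𝕜 := ℝ) X x₀)) B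
      x₀ := B.hasFDerivAt.add_const _
  ext i j
  simp only [hessM, Matrix.of_apply, iteratedFDeriv_two_apply, h1', h2.fderiv]
  have := inner_single_op X i j
  rw [← op_symm hX] at this
  simpa [hB] using this

lemma hermitian_hessM {φ : Euc d → ℝ} {x₀ : Euc d} (hφ : ContDiffAt ℝ 2 φ x₀) :
    (hessM φ x₀).IsHermitian := by
  have hs : IsSymmSndFDerivAt ℝ φ x₀ := hφ.isSymmSndFDerivAt (by simp)
  ext i j
  simp only [hessM, Matrix.conjTranspose_apply, Matrix.of_apply, iteratedFDeriv_two_apply,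
    star_trivial]
  exact hs.eq _ _

/-- Second-order Taylor expansion in terms of the gradient and the Hessian matrix. -/
lemma taylor_two {φ : Euc d → ℝ} {x₀ : Euc d} (hφ : ContDiffAt ℝ 2 φ x₀) {γ : ℝ} (hγ : 0 < γ) :
    ∀ᶠ y in 𝓝 x₀, |φ y - φ x₀ - qpoly (gradient φ x₀) (hessM φ x₀) (y - x₀)|
      ≤ γ * ‖y - x₀‖ ^ 2 := by
  have hH := hermitian_hessM hφ
  have hd : DifferentiableAt ℝ (fderiv ℝ φ) x₀ :=
    (hφ.fderiv_right (m := 1) (by norm_num)).differentiableAt (by norm_num)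
  have h1 := (hasFDerivAt_iff_isLittleO.1 hd.hasFDerivAt).def hγ
  have h2 : ∀ᶠ y in 𝓝 x₀, DifferentiableAt ℝ φ y := by
    filter_upwards [hφ.eventually (by simp)] with y hy using hy.differentiableAt (by norm_num)
  obtain ⟨ρ, hρ, hball⟩ := Metric.eventually_nhds_iff_ball.1 (h1.and h2)
  filter_upwards [ball_mem_nhds x₀ hρ] with y hy
  set r : Euc d → ℝ := fun z => φ z - qpoly (gradient φ x₀) (hessM φ x₀) (z - x₀) with hr
  set r' : Euc d → (Euc d →L[ℝ] ℝ) := fun z => fderiv ℝ φ z - innerSL ℝ (gradient φ x₀ +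
    Matrix.toEuclideanCLM (𝕜 := ℝ) (hessM φ x₀) (z - x₀)) with hr'
  have hin : ∀ z ∈ closedBall x₀ ‖y - x₀‖, z ∈ ball x₀ ρ := fun z hz => by
    rw [mem_ball] at *
    exact (mem_closedBall.1 hz).trans_lt (by rwa [← dist_eq_norm])
  have hder : ∀ z ∈ closedBall x₀ ‖y - x₀‖,
      HasFDerivWithinAt r (r' z) (closedBall x₀ ‖y - x₀‖) z := fun z hz =>
    (((hball z (hin z hz)).2.hasFDerivAt).sub (hasFDerivAt_qpoly hH _ x₀ z)).hasFDerivWithinAt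
  have hbd : ∀ z ∈ closedBall x₀ ‖y - x₀‖, ‖r' z‖ ≤ γ * ‖y - x₀‖ := by
    intro z hz
    have h3 := (hball z (hin z hz)).1
    have h4 : r' z = fderiv ℝ φ z - fderiv ℝ φ x₀ - fderiv ℝ (fderiv ℝ φ) x₀ (z - x₀) := by
      ext v
      have h5 := bilin_eq_inner (fderiv ℝ (fderiv ℝ φ) x₀) (z - x₀) v
      have h6 : fderiv ℝ φ x₀ v = ⟪gradient φ x₀, v⟫ := by
        rw [gradient, InnerProductSpace.toDual_symm_apply]
      have h7 : (Matrix.of fun i j => fderiv ℝ (fderiv ℝ φ) x₀ (EuclideanSpace.single i 1)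
          (EuclideanSpace.single j 1)) = hessM φ x₀ := by
        ext i j
        simp [hessM, iteratedFDeriv_two_apply]
      rw [h7] at h5
      simp only [hr', sub_apply, innerSL_apply_apply, inner_add_left, h5, h6,
        op_symm hH]
      ring
    rw [h4]
    refine h3.trans ?_
    have : ‖z - x₀‖ ≤ ‖y - x₀‖ := by rw [← dist_eq_norm]; exact hz
    gcongr
  have := Convex.norm_image_sub_le_of_norm_hasFDerivWithin_le hder hbd (convex_closedBall _ _)
    (mem_closedBall_self (norm_nonneg _)) (by rw [mem_closedBall, dist_eq_norm] : y ∈ _)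
  simp only [hr, sub_self, qpoly_zero, sub_zero, Real.norm_eq_abs] at this
  rw [show φ y - φ x₀ - qpoly (gradient φ x₀) (hessM φ x₀) (y - x₀) =
    φ y - qpoly (gradient φ x₀) (hessM φ x₀) (y - x₀) - φ x₀ by ring]
  linarith [this]

/-- A `C²` test function touching from above yields superjets with slightly larger Hessian. -/
lemma jetAbove_of_test {u φ : Euc d → ℝ} {x₀ : Euc d} (hφ : ContDiffAt ℝ 2 φ x₀)
    (hmax : IsLocalMax (fun x => u x - φ x) x₀) {γ : ℝ} (hγ : 0 < γ) :
    JetAbove u x₀ (gradient φ x₀) (hessM φ x₀ + γ • 1) := by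
  refine ⟨(hermitian_hessM hφ).add (hermitian_smul_one _), ?_⟩
  filter_upwards [hmax, taylor_two hφ (half_pos hγ)] with y h1 h2
  rw [qpoly_add_smul_one]
  have := (abs_le.1 h2).2
  have h1' : u y - φ y ≤ u x₀ - φ x₀ := h1
  linarith

/-- Viscosity subsolutions in the sense of superjets are viscosity subsolutions in the sense of
test functions. -/
lemma SubEq.viscSubSolPure {Lam : ℝ} {F : Mat d → ℝ} (hF : Ell Lam F) {g u : Euc d → ℝ}
    {s : Set (Euc d)} (h : SubEq F (fun x _ _ => g x) u s) : ViscSubSolPure F g u s := by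
  intro x₀ hx₀ φ hφ hmax
  refine le_of_forall_pos_le_add fun δ hδ => ?_
  have hL := hF.nonneg
  have hγ : 0 < δ / (Lam + 1) := by positivity
  have h1 := h x₀ hx₀ _ _ (jetAbove_of_test hφ hmax hγ)
  have h2 := hF.lip (hessM φ x₀) (δ / (Lam + 1)) (hermitian_hessM hφ) hγ.le
  have h3 : Lam * (δ / (Lam + 1)) ≤ δ := by
    rw [← mul_div_assoc, div_le_iff₀ (by positivity)]; nlinarith
  linarith

lemma hessM_neg (φ : Euc d → ℝ) (x : Euc d) : hessM (fun y => - φ y) x = - hessM φ x := by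
  ext i j
  have : iteratedFDeriv ℝ 2 (fun y => - φ y) x = - iteratedFDeriv ℝ 2 φ x :=
    iteratedFDeriv_neg_apply
  simp [hessM, this]

lemma SupEq.viscSuperSolPure {Lam : ℝ} {F : Mat d → ℝ} (hF : Ell Lam F) {g u : Euc d → ℝ}
    {s : Set (Euc d)} (h : SupEq F (fun x _ _ => g x) u s) : ViscSuperSolPure F g u s := by
  intro x₀ hx₀ φ hφ hmin
  have h1 := (supEq_iff_dual.1 h).viscSubSolPure (g := fun x => - g x) hF.dual x₀ hx₀
    (fun y => - φ y) hφ.neg (by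
      filter_upwards [hmin] with y hy
      have hy' : u x₀ - φ x₀ ≤ u y - φ y := hy
      linarith)
  rw [hessM_neg] at h1
  simp only [dualF, neg_neg] at h1
  linarith

lemma SubEq.congrQ {F : Mat d → ℝ} {Q Q' : Euc d → ℝ → Euc d → ℝ} {u : Euc d → ℝ}
    {s s' : Set (Euc d)} (h : SubEq F Q u s) (hs : s' ⊆ s)
    (hQ : ∀ x ∈ s', ∀ p X, JetAbove u x p X → Q' x (u x) p ≤ Q x (u x) p) : SubEq F Q' u s' :=
  fun x hx p X hj => (hQ x hx p X hj).trans (h x (hs hx) p X hj)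

lemma SupEq.congrQ {F : Mat d → ℝ} {Q Q' : Euc d → ℝ → Euc d → ℝ} {u : Euc d → ℝ}
    {s s' : Set (Euc d)} (h : SupEq F Q u s) (hs : s' ⊆ s)
    (hQ : ∀ x ∈ s', ∀ p X, JetBelow u x p X → Q x (u x) p ≤ Q' x (u x) p) : SupEq F Q' u s' :=
  fun x hx p X hj => (h x (hs hx) p X hj).trans (hQ x hx p X hj)

/-- Where `u` is differentiable, the first component of a superjet is the gradient. -/
lemma JetAbove.eq_gradient {u : Euc d → ℝ} {x p G : Euc d} {X : Mat d} (hj : JetAbove u x p X)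
    (hG : HasGradientAt u G x) : p = G := by
  have h1 : IsLocalMax (fun y => u y - qpoly p X (y - x)) x := by
    filter_upwards [hj.2] with y hy
    simp only [sub_self, qpoly_zero]; linarith
  have h2 := (hasGradientAt_iff_hasFDerivAt.1 hG).sub (hasFDerivAt_qpoly hj.1 p x x)
  have h3 := h1.hasFDerivAt_eq_zero h2
  have h4 := DFunLike.congr_fun h3 (G - p)
  simp only [sub_apply, InnerProductSpace.toDual_apply_apply,
    innerSL_apply_apply, sub_self, map_zero, add_zero, zero_apply,
    ← inner_sub_left] at h4
  have := inner_self_eq_zero.1 h4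
  exact (sub_eq_zero.1 this).symm

lemma HasGradientAt.neg_fun {u : Euc d → ℝ} {x G : Euc d} (hG : HasGradientAt u G x) :
    HasGradientAt (fun y => - u y) (-G) x := by
  rw [hasGradientAt_iff_hasFDerivAt] at *
  exact (HasFDerivAt.fun_neg hG).congr_fderiv (by ext v; simp)

lemma JetBelow.eq_gradient {u : Euc d → ℝ} {x p G : Euc d} {X : Mat d} (hj : JetBelow u x p X)
    (hG : HasGradientAt u G x) : p = G := by
  have h1 : JetAbove (fun y => - u y) x (-p) (-X) := jetAbove_neg.2 (by simpa using hj)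
  exact neg_inj.1 (h1.eq_gradient hG.neg_fun)

end calculus

/-! ### The regularity hypothesis, rescaled, and passage to the limit -/

/-- The interior `C^{1,β}` estimate for `F(D²w) = g` on the unit ball, with constant `C`. -/
def Reg {d : ℕ} (F : Mat d → ℝ) (β C : ℝ) : Prop :=
  ∀ (g : Euc d → ℝ), ContinuousOn g (ball 0 1) →
    (∃ K, ∀ x ∈ ball (0 : Euc d) 1, |g x| ≤ K) →
  ∀ w : Euc d → ℝ, ContinuousOn w (ball 0 1) →
    ViscSolPure F g w (ball 0 1) →
  ∃ Dw : Euc d → Euc d,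
    (∀ y ∈ ball (0 : Euc d) (1/2), HasGradientAt w (Dw y) y) ∧
    ∀ Kw Kg : ℝ, (∀ x ∈ ball (0 : Euc d) 1, |w x| ≤ Kw) →
      (∀ x ∈ ball (0 : Euc d) 1, |g x| ≤ Kg) →
      (∀ x ∈ ball (0 : Euc d) (1/2), |w x| + ‖Dw x‖ ≤ C * (Kw + Kg)) ∧
      ∀ x ∈ ball (0 : Euc d) (1/2), ∀ y ∈ ball (0 : Euc d) (1/2),
        ‖Dw x - Dw y‖ ≤ C * (Kw + Kg) * ‖x - y‖ ^ β

section reg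
variable {d : ℕ}

lemma qpoly_scale (p : Euc d) (X : Mat d) {ρ : ℝ} (hρ : 0 < ρ) (h : Euc d) :
    qpoly p X (ρ⁻¹ • h) = (ρ⁻¹) ^ 2 * qpoly (ρ • p) X h := by
  simp only [qpoly, qf_smul, inner_smul_left, inner_smul_right, RCLike.conj_to_real]
  field_simp

lemma tendsto_unscale {c x : Euc d} {ρ : ℝ} (hρ : 0 < ρ) :
    Tendsto (fun z : Euc d => ρ⁻¹ • (z - c)) (𝓝 (c + ρ • x)) (𝓝 x) := by
  have h : Continuous (fun z : Euc d => ρ⁻¹ • (z - c)) := by fun_prop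
  have := h.tendsto (c + ρ • x)
  simpa [smul_smul, hρ.ne'] using this

lemma jetAbove_scale {w : Euc d → ℝ} {c x p : Euc d} {X : Mat d} {ρ : ℝ} (hρ : 0 < ρ)
    (h : JetAbove (fun y => (ρ⁻¹) ^ 2 * w (c + ρ • y)) x p X) :
    JetAbove w (c + ρ • x) (ρ • p) X := by
  refine ⟨h.1, ?_⟩
  filter_upwards [(tendsto_unscale (c := c) hρ).eventually h.2] with z hz
  have e1 : c + ρ • ρ⁻¹ • (z - c) = z := by simp [smul_smul, hρ.ne']
  have e2 : ρ⁻¹ • (z - c) - x = ρ⁻¹ • (z - (c + ρ • x)) := by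
    rw [← sub_sub, smul_sub ρ⁻¹ (z - c), smul_smul, inv_mul_cancel₀ hρ.ne', one_smul]
  rw [e1, e2, qpoly_scale p X hρ, ← mul_add] at hz
  exact le_of_mul_le_mul_left hz (by positivity)

lemma jetBelow_scale {w : Euc d → ℝ} {c x p : Euc d} {X : Mat d} {ρ : ℝ} (hρ : 0 < ρ)
    (h : JetBelow (fun y => (ρ⁻¹) ^ 2 * w (c + ρ • y)) x p X) :
    JetBelow w (c + ρ • x) (ρ • p) X := by
  have h1 : JetAbove (fun y => (ρ⁻¹) ^ 2 * (fun z => - w z) (c + ρ • y)) x (-p) (-X) := by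
    have := (jetAbove_neg (p := -p) (X := -X)).2 (by simpa using h)
    simpa using this
  have h2 := jetAbove_neg.1 (jetAbove_scale hρ h1)
  simpa using h2

/-- The estimate `Reg` on a ball of radius `ρ`, obtained by the scaling
`w ↦ ρ⁻² w (c + ρ ·)`, which preserves the equation. -/
lemma Reg.scaled {Lam : ℝ} {F : Mat d → ℝ} (hF : Ell Lam F) {β C : ℝ} (hR : Reg F β C)
    {c : Euc d} {ρ : ℝ} (hρ : 0 < ρ) {w g : Euc d → ℝ} {Kw Kg : ℝ}
    (hw : ContinuousOn w (ball c ρ)) (hg : ContinuousOn g (ball c ρ))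
    (hwb : ∀ x ∈ ball c ρ, |w x| ≤ Kw) (hgb : ∀ x ∈ ball c ρ, |g x| ≤ Kg)
    (hsub : SubEq F (fun x _ _ => g x) w (ball c ρ))
    (hsup : SupEq F (fun x _ _ => g x) w (ball c ρ)) :
    ∃ Dw : Euc d → Euc d,
      (∀ y ∈ ball c (ρ / 2), HasGradientAt w (Dw y) y ∧ ‖Dw y‖ ≤ C * (Kw / ρ + ρ * Kg)) ∧
      ∀ x ∈ ball c (ρ / 2), ∀ y ∈ ball c (ρ / 2),
        ‖Dw x - Dw y‖ ≤ C * (Kw / ρ + ρ * Kg) * (ρ⁻¹ * ‖x - y‖) ^ β := by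
  have hmap : ∀ x ∈ ball (0 : Euc d) 1, c + ρ • x ∈ ball c ρ := by
    intro x hx
    rw [mem_ball_zero_iff] at hx
    rw [mem_ball_iff_norm, add_sub_cancel_left, norm_smul, Real.norm_of_nonneg hρ.le]
    nlinarith
  have hmap' : ∀ y ∈ ball c (ρ / 2), ρ⁻¹ • (y - c) ∈ ball (0 : Euc d) (1 / 2) := by
    intro y hy
    rw [mem_ball_iff_norm] at hy
    rw [mem_ball_zero_iff, norm_smul, Real.norm_of_nonneg (inv_nonneg.2 hρ.le),
      inv_mul_lt_iff₀ hρ]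
    linarith
  have hcont : ContinuousOn (fun x : Euc d => c + ρ • x) (ball 0 1) := by fun_prop
  have hgt : ContinuousOn (fun x => g (c + ρ • x)) (ball (0 : Euc d) 1) := hg.comp hcont hmap
  have hwt : ContinuousOn (fun x => (ρ⁻¹) ^ 2 * w (c + ρ • x)) (ball (0 : Euc d) 1) :=
    continuousOn_const.mul (hw.comp hcont hmap)
  have hgtb : ∀ x ∈ ball (0 : Euc d) 1, |g (c + ρ • x)| ≤ Kg := fun x hx => hgb _ (hmap x hx)
  have hwtb : ∀ x ∈ ball (0 : Euc d) 1, |(ρ⁻¹) ^ 2 * w (c + ρ • x)| ≤ (ρ⁻¹) ^ 2 * Kw := by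
    intro x hx
    rw [abs_mul, abs_of_nonneg (by positivity)]
    exact mul_le_mul_of_nonneg_left (hwb _ (hmap x hx)) (by positivity)
  have hs1 : SubEq F (fun x _ _ => g (c + ρ • x)) (fun x => (ρ⁻¹) ^ 2 * w (c + ρ • x))
      (ball 0 1) := fun x hx p X hj => hsub _ (hmap x hx) _ _ (jetAbove_scale hρ hj)
  have hs2 : SupEq F (fun x _ _ => g (c + ρ • x)) (fun x => (ρ⁻¹) ^ 2 * w (c + ρ • x))
      (ball 0 1) := fun x hx p X hj => hsup _ (hmap x hx) _ _ (jetBelow_scale hρ hj)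
  obtain ⟨D, hD, hest⟩ := hR _ hgt ⟨Kg, hgtb⟩ _ hwt
    ⟨hs1.viscSubSolPure hF, hs2.viscSuperSolPure hF⟩
  obtain ⟨hb, hh⟩ := hest _ _ hwtb hgtb
  have econst : C * (Kw / ρ + ρ * Kg) = ρ * (C * ((ρ⁻¹) ^ 2 * Kw + Kg)) := by
    field_simp
  refine ⟨fun y => ρ • D (ρ⁻¹ • (y - c)), fun y hy => ⟨?_, ?_⟩, fun x hx y hy => ?_⟩
  · have h1 := hasGradientAt_iff_hasFDerivAt.1 (hD _ (hmap' y hy))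
    have h2 : HasFDerivAt (fun z : Euc d => ρ⁻¹ • (z - c))
        (ρ⁻¹ • ContinuousLinearMap.id ℝ (Euc d)) y :=
      ((hasFDerivAt_id y).sub_const c).const_smul ρ⁻¹
    have h3 := (h1.comp y h2).const_mul (ρ ^ 2)
    rw [hasGradientAt_iff_hasFDerivAt]
    have e : (fun z => ρ ^ 2 * ((fun x => (ρ⁻¹) ^ 2 * w (c + ρ • x)) ∘
        fun z : Euc d => ρ⁻¹ • (z - c)) z) = w := by
      funext z
      simp only [Function.comp_apply, smul_smul, mul_inv_cancel₀ hρ.ne', one_smul,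
        add_sub_cancel]
      field_simp
    rw [e] at h3
    refine h3.congr_fderiv ?_
    ext v
    simp
    field_simp
  · have := hb _ (hmap' y hy)
    rw [norm_smul, Real.norm_of_nonneg hρ.le, econst]
    refine mul_le_mul_of_nonneg_left ?_ hρ.le
    linarith [abs_nonneg ((ρ⁻¹) ^ 2 * w (c + ρ • (ρ⁻¹ • (y - c))))]
  · have := hh _ (hmap' x hx) _ (hmap' y hy)
    have e : ρ⁻¹ • (x - c) - ρ⁻¹ • (y - c) = ρ⁻¹ • (x - y) := by
      rw [← smul_sub, sub_sub_sub_cancel_right]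
    rw [e, norm_smul, Real.norm_of_nonneg (inv_nonneg.2 hρ.le)] at this
    rw [← smul_sub, norm_smul, Real.norm_of_nonneg hρ.le, econst, mul_assoc]
    exact mul_le_mul_of_nonneg_left this hρ.le

/-- First-order Taylor estimate from a Hölder bound on the gradient. -/
lemma taylor_one {w : Euc d → ℝ} {G : Euc d → Euc d} {c : Euc d} {r N β : ℝ} (hβ : 0 < β)
    (hN0 : 0 ≤ N) (hG : ∀ y ∈ ball c r, HasGradientAt w (G y) y)
    (hN : ∀ x ∈ ball c r, ∀ y ∈ ball c r, ‖G x - G y‖ ≤ N * ‖x - y‖ ^ β)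
    {x y : Euc d} (hx : x ∈ ball c r) (hy : y ∈ ball c r) :
    |w y - w x - ⟪G x, y - x⟫| ≤ N * ‖y - x‖ ^ β * ‖y - x‖ := by
  have hconv : Convex ℝ (ball c r ∩ closedBall x ‖y - x‖) :=
    (convex_ball c r).inter (convex_closedBall _ _)
  have := hconv.norm_image_sub_le_of_norm_hasFDerivWithin_le'
    (f := w) (f' := fun z => InnerProductSpace.toDual ℝ (Euc d) (G z))
    (φ := InnerProductSpace.toDual ℝ (Euc d) (G x)) (C := N * ‖y - x‖ ^ β)
    (fun z hz => (hasGradientAt_iff_hasFDerivAt.1 (hG z hz.1)).hasFDerivWithinAt)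
    (fun z hz => by
      rw [← map_sub, LinearIsometryEquiv.norm_map]
      refine (hN z hz.1 x hx).trans ?_
      have : ‖z - x‖ ≤ ‖y - x‖ := by rw [← dist_eq_norm]; exact hz.2
      gcongr)
    ⟨hx, mem_closedBall_self (norm_nonneg _)⟩ ⟨hy, by rw [mem_closedBall, dist_eq_norm]⟩
  simpa using this

/-- Uniform `C^{1,β}` bounds pass to pointwise limits. -/
lemma gradient_limit {w : ℕ → Euc d → ℝ} {u : Euc d → ℝ} {c : Euc d} {r M N β : ℝ} (hβ : 0 < β)
    (hN0 : 0 ≤ N) (G : ℕ → Euc d → Euc d)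
    (hG : ∀ n, ∀ y ∈ ball c r, HasGradientAt (w n) (G n y) y)
    (hM : ∀ n, ∀ y ∈ ball c r, ‖G n y‖ ≤ M)
    (hN : ∀ n, ∀ x ∈ ball c r, ∀ y ∈ ball c r, ‖G n x - G n y‖ ≤ N * ‖x - y‖ ^ β)
    (hlim : ∀ y ∈ ball c r, Tendsto (fun n => w n y) atTop (𝓝 (u y))) :
    ∃ D : Euc d → Euc d, (∀ y ∈ ball c r, HasGradientAt u (D y) y ∧ ‖D y‖ ≤ M) ∧
      ∀ x ∈ ball c r, ∀ y ∈ ball c r, ‖D x - D y‖ ≤ N * ‖x - y‖ ^ β := by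
  have hU : (hyperfilter ℕ : Filter ℕ) ≤ atTop := Nat.hyperfilter_le_atTop
  have hex : ∀ y, ∃ D : Euc d, y ∈ ball c r →
      ‖D‖ ≤ M ∧ Tendsto (fun n => G n y) (hyperfilter ℕ) (𝓝 D) := by
    intro y
    by_cases hy : y ∈ ball c r
    · obtain ⟨D, hD, hD'⟩ := (isCompact_closedBall (0 : Euc d) M).ultrafilter_le_nhds
        ((hyperfilter ℕ).map fun n => G n y) (by
          rw [le_principal_iff]
          change ∀ᶠ n in (hyperfilter ℕ : Filter ℕ), G n y ∈ closedBall (0 : Euc d) M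
          exact Eventually.of_forall fun n => by simpa using hM n y hy)
      exact ⟨D, fun _ => ⟨by simpa using hD, hD'⟩⟩
    · exact ⟨0, fun h => absurd h hy⟩
  choose D hD using hex
  refine ⟨D, fun x hx => ⟨?_, (hD x hx).1⟩, fun x hx y hy => ?_⟩
  · rw [hasGradientAt_iff_isLittleO]
    rw [Asymptotics.isLittleO_iff]
    intro ε hε
    have h1 : Tendsto (fun y : Euc d => N * ‖y - x‖ ^ β) (𝓝 x) (𝓝 0) := by
      have h : Continuous (fun y : Euc d => N * ‖y - x‖ ^ β) :=
        continuous_const.mul ((continuous_id.sub continuous_const).norm.rpow_const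
          fun _ => Or.inr hβ.le)
      simpa [Real.zero_rpow hβ.ne'] using h.tendsto x
    filter_upwards [h1.eventually (gt_mem_nhds hε), isOpen_ball.mem_nhds hx] with y hy1 hy2
    have h2 : Tendsto (fun n => |w n y - w n x - ⟪G n x, y - x⟫|) (hyperfilter ℕ)
        (𝓝 |u y - u x - ⟪D x, y - x⟫|) :=
      ((((hlim y hy2).mono_left hU).sub ((hlim x hx).mono_left hU)).sub
        ((hD x hx).2.inner tendsto_const_nhds)).abs
    have h3 := le_of_tendsto h2 (Eventually.of_forall fun n =>
      taylor_one hβ hN0 (hG n) (hN n) hx hy2)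
    rw [Real.norm_eq_abs]
    refine h3.trans ?_
    gcongr
  · exact le_of_tendsto ((hD x hx).2.sub (hD y hy).2).norm
      (Eventually.of_forall fun n => hN n x hx y hy)

end reg

/-! ### Differentiability of Lipschitz functions with bounded `F(D²w)` -/

section lipschitz
variable {d : ℕ}

lemma continuous_of_lip {w : Euc d → ℝ} {L : ℝ} (hw : ∀ x y, w x - w y ≤ L * ‖x - y‖) :
    Continuous w := by
  have h0 : LipschitzWith (Real.toNNReal |L|) w := by
    refine LipschitzWith.of_dist_le_mul fun x y => ?_
    rw [Real.coe_toNNReal _ (abs_nonneg L), Real.dist_eq, dist_eq_norm, abs_le]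
    have h1 := hw x y
    have h2 := hw y x
    rw [norm_sub_rev] at h2
    have h3 : L * ‖x - y‖ ≤ |L| * ‖x - y‖ :=
      mul_le_mul_of_nonneg_right (le_abs_self L) (norm_nonneg _)
    constructor <;> linarith
  exact h0.continuous

lemma continuousAt_of_holder {D : Euc d → Euc d} {c : Euc d} {r N β : ℝ} (hβ : 0 < β) (hr : 0 < r)
    (h : ∀ x ∈ ball c r, ∀ y ∈ ball c r, ‖D x - D y‖ ≤ N * ‖x - y‖ ^ β) : ContinuousAt D c := by
  rw [ContinuousAt, tendsto_iff_norm_sub_tendsto_zero]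
  have h1 : Tendsto (fun y : Euc d => N * ‖y - c‖ ^ β) (𝓝 c) (𝓝 0) := by
    have h : Continuous (fun y : Euc d => N * ‖y - c‖ ^ β) :=
      continuous_const.mul ((continuous_id.sub continuous_const).norm.rpow_const
        fun _ => Or.inr hβ.le)
    simpa [Real.zero_rpow hβ.ne'] using h.tendsto c
  refine squeeze_zero' (Eventually.of_forall fun _ => norm_nonneg _) ?_ h1
  filter_upwards [ball_mem_nhds c hr] with y hy using h y hy c (mem_ball_self hr)

/-- The equation `F(D²v) = (v - w)/ε` is solved between the barriers `w ± εK`. -/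
lemma exists_resolvent {Lam : ℝ} {F : Mat d → ℝ} (hF : Ell Lam F)
    {w : Euc d → ℝ} {L K ε : ℝ} (hK : 0 ≤ K) (hε : 0 < ε)
    (hw : ∀ x y, w x - w y ≤ L * ‖x - y‖)
    (hsub : SubEq F (fun _ _ _ => -K) w univ) (hsup : SupEq F (fun _ _ _ => K) w univ) :
    ∃ v : Euc d → ℝ, Continuous v ∧ (∀ x, |v x - w x| ≤ ε * K) ∧
      SubEq F (fun x _ _ => (v x - w x) / ε) v univ ∧
      SupEq F (fun x _ _ => (v x - w x) / ε) v univ := by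
  have hwc := continuous_of_lip hw
  have hεK : 0 ≤ ε * K := by positivity
  obtain ⟨v, hv, h1, h2, h3, h4⟩ := perron hF (Q := fun x r _ => (r - w x) / ε) (L := L)
    (U := fun x => w x - ε * K) (V := fun x => w x + ε * K)
    (by fun_prop)
    (fun x p r r' h => by gcongr)
    (fun x h r p => by
      have := hw (x + h) x
      rw [add_sub_cancel_left] at this
      gcongr ?_ / ε
      linarith)
    (fun x y => by have := hw x y; linarith) (by fun_prop) (by fun_prop)
    (fun x => by linarith)
    (fun x _ p X hj => by
      have hj' : JetAbove w x p X := ⟨hj.1, by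
        filter_upwards [hj.2] with y hy; linarith⟩
      have := hsub x trivial p X hj'
      simp only at this ⊢
      rw [show (w x - ε * K - w x) / ε = -K by field_simp; ring]
      exact this)
    (fun x _ p X hj => by
      have hj' : JetBelow w x p X := ⟨hj.1, by
        filter_upwards [hj.2] with y hy; linarith⟩
      have := hsup x trivial p X hj'
      simp only at this ⊢
      rw [show (w x + ε * K - w x) / ε = K by field_simp; ring]
      exact this)
  refine ⟨v, continuous_of_lip hv, fun x => ?_, h3, h4⟩
  rw [abs_le]
  constructor <;> linarith [h1 x, h2 x]

/-- A bounded Lipschitz function with `-K ≤ F(D²w) ≤ K` is of class `C¹`: it is a uniform limit of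
solutions `v` of `F(D²v) = (v - w)/ε`, whose right-hand sides are continuous and bounded by `K`. -/
lemma c1_of_lipschitz {Lam : ℝ} {F : Mat d → ℝ} (hF : Ell Lam F) {β C : ℝ} (hβ : 0 < β)
    (hC : 0 < C) (hR : Reg F β C) {w : Euc d → ℝ} {L A K : ℝ} (hK : 0 ≤ K)
    (hw : ∀ x y, w x - w y ≤ L * ‖x - y‖) (hA : ∀ x, |w x| ≤ A)
    (hsub : SubEq F (fun _ _ _ => -K) w univ) (hsup : SupEq F (fun _ _ _ => K) w univ) :
    (∀ y, HasGradientAt w (gradient w y) y) ∧ Continuous (gradient w) := by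
  have hwc := continuous_of_lip hw
  have hA0 : 0 ≤ A := (abs_nonneg _).trans (hA 0)
  have hε : ∀ n : ℕ, (0 : ℝ) < 1 / ((n : ℝ) + 1) := fun n => by positivity
  choose v hvc hvw hv1 hv2 using fun n => exists_resolvent hF hK (hε n) hw hsub hsup
  have hloc : ∀ c : Euc d, ∃ D : Euc d → Euc d,
      (∀ y ∈ ball c (1 / 2), HasGradientAt w (D y) y ∧ ‖D y‖ ≤ C * ((A + K) / 1 + 1 * K)) ∧
      ∀ x ∈ ball c (1 / 2), ∀ y ∈ ball c (1 / 2),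
        ‖D x - D y‖ ≤ C * ((A + K) / 1 + 1 * K) * ‖x - y‖ ^ β := by
    intro c
    have := fun n => hR.scaled hF (c := c) (ρ := 1) one_pos (w := v n)
      (g := fun x => (v n x - w x) / (1 / ((n : ℝ) + 1))) (Kw := A + K) (Kg := K)
      (hvc n).continuousOn (((hvc n).sub hwc).div_const _).continuousOn
      (fun x _ => by
        have h1 := abs_le.1 (hvw n x)
        have h2 := abs_le.1 (hA x)
        have h3 : 1 / ((n : ℝ) + 1) * K ≤ K := by
          refine mul_le_of_le_one_left hK ?_
          rw [div_le_one (by positivity)]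
          linarith [(Nat.cast_nonneg n : (0 : ℝ) ≤ n)]
        rw [abs_le]; constructor <;> linarith)
      (fun x _ => by
        rw [abs_div, abs_of_pos (hε n), div_le_iff₀ (hε n), mul_comm K]
        exact hvw n x)
      (fun x _ => hv1 n x trivial) (fun x _ => hv2 n x trivial)
    choose G hG1 hG2 using this
    refine gradient_limit hβ (by positivity) G (fun n y hy => (hG1 n y hy).1)
      (fun n y hy => (hG1 n y hy).2) (fun n x hx y hy => by simpa using hG2 n x hx y hy)
      fun y _ => ?_
    rw [tendsto_iff_norm_sub_tendsto_zero]
    refine squeeze_zero (fun _ => norm_nonneg _) (fun n => hvw n y) ?_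
    simpa using tendsto_one_div_add_atTop_nhds_zero_nat.mul_const K
  have hgr : ∀ y, HasGradientAt w (gradient w y) y := by
    intro y
    obtain ⟨D, hD, -⟩ := hloc y
    have := (hD y (mem_ball_self (by norm_num))).1
    rwa [this.gradient]
  refine ⟨hgr, continuous_iff_continuousAt.2 fun c => ?_⟩
  obtain ⟨D, hD, hD2⟩ := hloc c
  refine continuousAt_of_holder hβ (r := 1 / 2) (by norm_num) (N := C * ((A + K) / 1 + 1 * K))
    fun x hx y hy => ?_
  rw [(hD x hx).1.gradient, (hD y hy).1.gradient]
  exact hD2 x hx y hy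

end lipschitz

/-! ### Uniform estimates for Lipschitz solutions of `F(D²w) = (1 + |Dw|) h` -/

section global
variable {d : ℕ}

lemma JetAbove.norm_le {w : Euc d → ℝ} {L : ℝ} (hw : ∀ x y, w x - w y ≤ L * ‖x - y‖)
    {x p : Euc d} {X : Mat d} (hj : JetAbove w x p X) : ‖p‖ ≤ |L| := by
  have h1 : Tendsto (fun t : ℝ => x - t • p) (𝓝 0) (𝓝 x) := by
    have : Continuous (fun t : ℝ => x - t • p) := by fun_prop
    simpa using this.tendsto 0
  have h2 : ∀ᶠ t in 𝓝[>] (0 : ℝ), ‖p‖ ^ 2 ≤ L * ‖p‖ + 1 / 2 * (t * qf X p) := by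
    filter_upwards [(h1.eventually hj.2).filter_mono nhdsWithin_le_nhds, self_mem_nhdsWithin]
      with t ht ht0
    have ht0 : 0 < t := ht0
    have h3 := hw x (x - t • p)
    rw [sub_sub_cancel, norm_smul, Real.norm_of_nonneg ht0.le] at h3
    have h4 : qpoly p X (x - t • p - x) = - (t * ‖p‖ ^ 2) + 1 / 2 * (t ^ 2 * qf X p) := by
      rw [show x - t • p - x = (-t) • p by rw [neg_smul]; abel]
      simp only [qpoly, qf_smul, inner_smul_right, real_inner_self_eq_norm_sq]
      ring
    rw [h4] at ht
    refine le_of_mul_le_mul_left ?_ ht0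
    nlinarith
  have h3 : Tendsto (fun t : ℝ => L * ‖p‖ + 1 / 2 * (t * qf X p)) (𝓝[>] 0) (𝓝 (L * ‖p‖)) := by
    have h : Continuous (fun t : ℝ => L * ‖p‖ + 1 / 2 * (t * qf X p)) := by fun_prop
    have := h.tendsto 0
    simp only [zero_mul, mul_zero, add_zero] at this
    exact this.mono_left nhdsWithin_le_nhds
  have h4 : ‖p‖ ^ 2 ≤ L * ‖p‖ := ge_of_tendsto h3 h2
  rcases (norm_nonneg p).eq_or_lt with h | h
  · rw [← h]; exact abs_nonneg L
  · exact (le_of_mul_le_mul_right (by linarith [sq ‖p‖]) h).trans (le_abs_self L)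

lemma JetBelow.norm_le {w : Euc d → ℝ} {L : ℝ} (hw : ∀ x y, w x - w y ≤ L * ‖x - y‖)
    {x p : Euc d} {X : Mat d} (hj : JetBelow w x p X) : ‖p‖ ≤ |L| := by
  have h1 : JetAbove (fun y => - w y) x (-p) (-X) := jetAbove_neg.2 (by simpa using hj)
  have := h1.norm_le (L := L) fun x y => by
    have := hw y x
    rw [norm_sub_rev] at this; linarith
  simpa using this

lemma norm_gradient_le {w : Euc d → ℝ} {L : ℝ} (hw : ∀ x y, w x - w y ≤ L * ‖x - y‖)
    {x G : Euc d} (hG : HasGradientAt w G x) : ‖G‖ ≤ |L| := by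
  have := (hasGradientAt_iff_hasFDerivAt.1 hG).le_of_lip' (C := |L|) (abs_nonneg L)
    (Eventually.of_forall fun y => by
      rw [Real.norm_eq_abs, abs_le]
      have h1 := hw y x
      have h2 := hw x y
      rw [norm_sub_rev] at h2
      have h3 : L * ‖y - x‖ ≤ |L| * ‖y - x‖ :=
        mul_le_mul_of_nonneg_right (le_abs_self L) (norm_nonneg _)
      constructor <;> linarith)
  simpa using this

/-- A bounded Lipschitz solution of `F(D²w) = (1 + |Dw|) h` on the whole space satisfies `C^{1,β}`
bounds depending only on the suprema of `w` and `h`. The Lipschitz constant of `w` does not enter: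
on balls of small radius `ρ` the term `ρ · sup |Dw|` in the interior estimate is absorbed. -/
lemma global_estimate {Lam : ℝ} {F : Mat d → ℝ} (hF : Ell Lam F) {β C : ℝ} (hβ : 0 < β)
    (hC : 0 < C) (hR : Reg F β C) {A K : ℝ} (hA : 0 ≤ A) (hK : 0 ≤ K) :
    ∃ M N : ℝ, 0 ≤ N ∧ ∀ (w h : Euc d → ℝ) (L : ℝ), (∀ x y, w x - w y ≤ L * ‖x - y‖) →
      (∀ x, |w x| ≤ A) → Continuous h → (∀ x, |h x| ≤ K) →
      SubEq F (fun x _ p => (1 + ‖p‖) * h x) w univ →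
      SupEq F (fun x _ p => (1 + ‖p‖) * h x) w univ →
      (∀ y, HasGradientAt w (gradient w y) y) ∧ (∀ y, ‖gradient w y‖ ≤ M) ∧
      ∀ c, ∀ x ∈ ball c (1 / 2), ∀ y ∈ ball c (1 / 2),
        ‖gradient w x - gradient w y‖ ≤ N * ‖x - y‖ ^ β := by
  set ρ : ℝ := 1 / (2 * C * K + 1) with hρdef
  have hρ : 0 < ρ := by positivity
  have hρK : C * (ρ * K) ≤ 1 / 2 := by
    rw [hρdef, one_div, ← mul_assoc, mul_comm C, mul_assoc, inv_mul_le_iff₀ (by positivity)]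
    linarith
  set M : ℝ := 2 * (C * (A / ρ)) + 1 with hM
  have hM0 : 0 ≤ M := by positivity
  refine ⟨M, C * (A / 1 + 1 * ((1 + M) * K)), by positivity, ?_⟩
  intro w h L hw hwA hhc hhK hsub hsup
  have hwc := continuous_of_lip hw
  have hK1 : 0 ≤ (1 + |L|) * K := by positivity
  have hbd : ∀ p : Euc d, ‖p‖ ≤ |L| → ∀ x, |(1 + ‖p‖) * h x| ≤ (1 + |L|) * K := by
    intro p hp x
    rw [abs_mul, abs_of_nonneg (by positivity)]
    have := hhK x
    gcongr
  obtain ⟨hgr, hgc⟩ := c1_of_lipschitz hF hβ hC hR hK1 hw hwA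
    (hsub.congrQ le_rfl fun x _ p X hj => (abs_le.1 (hbd p (hj.norm_le hw) x)).1)
    (hsup.congrQ le_rfl fun x _ p X hj => (abs_le.1 (hbd p (hj.norm_le hw) x)).2)
  set g : Euc d → ℝ := fun x => (1 + ‖gradient w x‖) * h x with hg
  have hgcont : Continuous g := by fun_prop
  have hs1 : SubEq F (fun x _ _ => g x) w univ := hsub.congrQ le_rfl fun x _ p X hj => by
    rw [hj.eq_gradient (hgr x)]
  have hs2 : SupEq F (fun x _ _ => g x) w univ := hsup.congrQ le_rfl fun x _ p X hj => by
    rw [hj.eq_gradient (hgr x)]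
  have hest : ∀ B : ℝ, (∀ y, ‖gradient w y‖ ≤ B) → ∀ (c : Euc d) (σ : ℝ), 0 < σ →
      (‖gradient w c‖ ≤ C * (A / σ + σ * ((1 + B) * K))) ∧
      ∀ x ∈ ball c (σ / 2), ∀ y ∈ ball c (σ / 2), ‖gradient w x - gradient w y‖ ≤
        C * (A / σ + σ * ((1 + B) * K)) * (σ⁻¹ * ‖x - y‖) ^ β := by
    intro B hB c σ hσ
    have hB0 : 0 ≤ B := (norm_nonneg _).trans (hB 0)
    obtain ⟨D, hD, hD2⟩ := hR.scaled hF (c := c) hσ (w := w) (g := g) (Kw := A)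
      (Kg := (1 + B) * K) hwc.continuousOn hgcont.continuousOn (fun x _ => hwA x)
      (fun x _ => by
        rw [hg, abs_mul, abs_of_nonneg (by positivity)]
        have h1 := hhK x
        have h2 := hB x
        gcongr) (fun x _ => hs1 x trivial) (fun x _ => hs2 x trivial)
    refine ⟨?_, fun x hx y hy => ?_⟩
    · have := hD c (mem_ball_self (by positivity))
      rw [this.1.gradient]; exact this.2
    · rw [(hD x hx).1.gradient, (hD y hy).1.gradient]
      exact hD2 x hx y hy
  have hbdd : BddAbove (range fun y => ‖gradient w y‖) :=
    ⟨|L|, by rintro _ ⟨y, rfl⟩; exact norm_gradient_le hw (hgr y)⟩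
  have hsupM : ∀ y, ‖gradient w y‖ ≤ M := by
    set S := ⨆ y, ‖gradient w y‖ with hS
    have hS1 : ∀ y, ‖gradient w y‖ ≤ S := fun y => le_ciSup hbdd y
    have hS0 : 0 ≤ S := (norm_nonneg _).trans (hS1 0)
    have hS2 : S ≤ C * (A / ρ + ρ * ((1 + S) * K)) :=
      ciSup_le fun y => (hest S hS1 y ρ hρ).1
    have h3 : C * (A / ρ + ρ * ((1 + S) * K)) = C * (A / ρ) + (C * (ρ * K)) * (1 + S) := by ring
    have h4 : S ≤ M := by rw [hM]; nlinarith
    exact fun y => (hS1 y).trans h4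
  refine ⟨hgr, hsupM, fun c x hx y hy => ?_⟩
  simpa using (hest M hsupM c 1 one_pos).2 x hx y hy

end global

/-! ### The singular equation: growth in the gradient, and vanishing gradients -/

section singular
variable {d : ℕ}

lemma exists_neg_eigenvector {X : Mat d} (hX : X.IsHermitian) (h : ¬ ∀ v, 0 ≤ qf X v) :
    ∃ (e : Euc d) (μ : ℝ), ‖e‖ = 1 ∧ μ < 0 ∧
      Matrix.toEuclideanCLM (𝕜 := ℝ) X e = μ • e := by
  have h1 : ¬ X.PosSemidef := by
    intro hp
    refine h fun v => ?_
    have := hp.dotProduct_mulVec_nonneg v.ofLp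
    rw [qf, Matrix.inner_toEuclideanCLM]
    simpa using this
  rw [hX.posSemidef_iff_eigenvalues_nonneg, Pi.le_def] at h1
  push Not at h1
  obtain ⟨i, hi⟩ := h1
  refine ⟨hX.eigenvectorBasis i, hX.eigenvalues i, by simp, by simpa using hi, ?_⟩
  apply WithLp.ofLp_injective
  rw [Matrix.ofLp_toEuclideanCLM, hX.mulVec_eigenvectorBasis]
  rfl

/-- Perturbation at a point where the superjet has zero gradient but a negative eigenvalue:
subtracting `½⟨h, Y h⟩ - ε |⟨e, h⟩|` moves the contact point slightly, and the new gradient is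
nonzero because its component along the eigenvector `e` is. -/
lemma exists_jet_ne_zero {u : Euc d → ℝ} {s : Set (Euc d)} (hs : IsOpen s)
    (hu : ContinuousOn u s) {x₀ e : Euc d} (hx₀ : x₀ ∈ s) {Y : Mat d} (hY : Y.IsHermitian)
    {γ ν : ℝ} (hγ : 0 < γ) (hν : ν < 0) (he : ‖e‖ = 1)
    (hYe : Matrix.toEuclideanCLM (𝕜 := ℝ) Y e = ν • e)
    (hle : ∀ᶠ y in 𝓝 x₀, u y ≤ u x₀ + 1 / 2 * qf Y (y - x₀) - γ * ‖y - x₀‖ ^ 2) :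
    ∀ᶠ ε in 𝓝[>] (0 : ℝ), ∃ x ∈ s, ∃ p : Euc d, p ≠ 0 ∧
      ‖p‖ ≤ (‖Matrix.toEuclideanCLM (𝕜 := ℝ) Y‖ / γ + 1) * ε ∧ JetAbove u x p Y := by
  obtain ⟨r, hr, hball⟩ := nhds_basis_closedBall.mem_iff.1
    (inter_mem hle (hs.mem_nhds hx₀))
  have hγr : 0 < γ * r := by positivity
  filter_upwards [self_mem_nhdsWithin, nhdsWithin_le_nhds (gt_mem_nhds hγr)] with ε hε hεr
  have hε : 0 < ε := hε
  set Φ : Euc d → ℝ := fun y => u y - 1 / 2 * qf Y (y - x₀) + ε * |⟪e, y - x₀⟫| with hΦ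
  have hqf := continuous_qf Y
  have hΦc : ContinuousOn Φ (closedBall x₀ r) := by
    have h1 : ContinuousOn u (closedBall x₀ r) := hu.mono fun y hy => (hball hy).2
    have h2 : Continuous fun y : Euc d => 1 / 2 * qf Y (y - x₀) := by fun_prop
    have h3 : Continuous fun y : Euc d => ε * |⟪e, y - x₀⟫| := by fun_prop
    exact (h1.sub h2.continuousOn).add h3.continuousOn
  obtain ⟨y₁, hy₁, hmax⟩ := (isCompact_closedBall x₀ r).exists_isMaxOn
    ⟨x₀, mem_closedBall_self hr.le⟩ hΦc
  set t := y₁ - x₀ with ht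
  have hnorm : ‖t‖ ≤ ε / γ := by
    have h1 : Φ x₀ ≤ Φ y₁ := hmax (mem_closedBall_self hr.le)
    have h2 : u y₁ ≤ u x₀ + 1 / 2 * qf Y t - γ * ‖t‖ ^ 2 := (hball hy₁).1
    have h3 : |⟪e, t⟫| ≤ ‖t‖ := by
      have := abs_real_inner_le_norm e t
      rwa [he, one_mul] at this
    have h4 : ε * |⟪e, t⟫| ≤ ε * ‖t‖ := by gcongr
    have h5 : u x₀ ≤ u y₁ - 1 / 2 * qf Y t + ε * |⟪e, t⟫| := by
      simpa [hΦ, qf_zero_right] using h1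
    have h6 : γ * ‖t‖ ^ 2 ≤ ε * ‖t‖ := by linarith
    rw [le_div_iff₀ hγ]
    rcases (norm_nonneg t).eq_or_lt with h | h
    · rw [← h]; linarith
    · exact le_of_mul_le_mul_right (by nlinarith) h
  have hyint : y₁ ∈ ball x₀ r := by
    rw [mem_ball_iff_norm]
    refine hnorm.trans_lt ?_
    rw [div_lt_iff₀ hγ]; linarith
  obtain ⟨σ, hσ1, hσ2⟩ : ∃ σ : ℝ, σ ^ 2 = 1 ∧ σ * ⟪e, t⟫ = |⟪e, t⟫| := by
    rcases le_total 0 ⟪e, t⟫ with h | h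
    · exact ⟨1, by norm_num, by rw [abs_of_nonneg h, one_mul]⟩
    · exact ⟨-1, by norm_num, by rw [abs_of_nonpos h]; ring⟩
  have hσabs : |σ| = 1 := by
    rw [← Real.sqrt_sq_eq_abs, hσ1, Real.sqrt_one]
  set p : Euc d := Matrix.toEuclideanCLM (𝕜 := ℝ) Y t - (ε * σ) • e with hp
  refine ⟨y₁, (hball hy₁).2, p, ?_, ?_, hY, ?_⟩
  · intro h0
    have h1 : ⟪p, e⟫ = ν * ⟪e, t⟫ - ε * σ := by
      rw [hp, inner_sub_left, op_symm hY, hYe, inner_smul_right, inner_smul_left,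
        real_inner_self_eq_norm_sq, he, real_inner_comm]
      simp
    rw [h0, inner_zero_left] at h1
    have h2 : ν * |⟪e, t⟫| - ε = 0 := by
      rw [← hσ2]; linear_combination (-σ) * h1 + ε * hσ1
    have := abs_nonneg ⟪e, t⟫
    nlinarith
  · rw [hp]
    refine (norm_sub_le _ _).trans ?_
    rw [norm_smul, he, mul_one, Real.norm_eq_abs, abs_mul, hσabs, mul_one, abs_of_pos hε, add_mul,
      one_mul]
    gcongr
    refine (ContinuousLinearMap.le_opNorm _ _).trans ?_
    rw [div_mul_eq_mul_div, mul_div_assoc]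
    gcongr
  · filter_upwards [isOpen_ball.mem_nhds hyint] with y hy
    have h1 : Φ y ≤ Φ y₁ := hmax (ball_subset_closedBall hy)
    have h2 : σ * ⟪e, y - x₀⟫ ≤ |⟪e, y - x₀⟫| := by
      refine (le_abs_self _).trans ?_
      rw [abs_mul, hσabs, one_mul]
    have h3 : ε * (σ * ⟪e, y - x₀⟫) ≤ ε * |⟪e, y - x₀⟫| := by gcongr
    have h4 := qpoly_add hY 0 t (y - y₁)
    have e1 : t + (y - y₁) = y - x₀ := by rw [ht]; abel
    have h5 : ⟪e, y - x₀⟫ = ⟪e, t⟫ + ⟪e, y - y₁⟫ := by rw [← e1, inner_add_right]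
    rw [e1] at h4
    simp only [qpoly, inner_zero_left, zero_add] at h4
    simp only [hΦ, ← ht, ← hσ2] at h1
    simp only [qpoly, hp, inner_sub_left, inner_smul_left, RCLike.conj_to_real]
    rw [h5] at h3
    rw [h5] at h1
    nlinarith

/-- The inequality `F(D²u) ≥ -K (1 + |Du|)`, known for superjets with nonzero gradient, extends to
all superjets. -/
lemma subEq_of_ne_zero {Lam : ℝ} {F : Mat d → ℝ} (hF : Ell Lam F) (hF0 : F 0 = 0) {K : ℝ}
    (hK : 0 ≤ K) {u : Euc d → ℝ} {s : Set (Euc d)} (hs : IsOpen s) (hu : ContinuousOn u s)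
    (h : ∀ x ∈ s, ∀ p X, p ≠ 0 → JetAbove u x p X → - (K * (1 + ‖p‖)) ≤ F X) :
    SubEq F (fun _ _ p => - (K * (1 + ‖p‖))) u s := by
  intro x₀ hx₀ p X hj
  by_cases hp : p = 0
  swap
  · exact h x₀ hx₀ p X hp hj
  subst hp
  simp only [norm_zero, add_zero, mul_one]
  by_cases hX : ∀ v, 0 ≤ qf X v
  · have := hF.mono 0 X (by simp [Matrix.IsHermitian]) hj.1 fun v => by simpa [qf] using hX v
    linarith
  obtain ⟨e, μ, he, hμ, hXe⟩ := exists_neg_eigenvector hj.1 hX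
  have key : ∀ᶠ γ in 𝓝[>] (0 : ℝ), -K ≤ F X + Lam * (2 * γ) := by
    have hμ2 : 0 < -μ / 2 := by linarith
    filter_upwards [self_mem_nhdsWithin, nhdsWithin_le_nhds (gt_mem_nhds hμ2)] with γ hγ hγμ
    have hγ : 0 < γ := hγ
    refine le_trans ?_ (hF.lip X (2 * γ) hj.1 (by positivity))
    have hev := exists_jet_ne_zero hs hu hx₀ (e := e) (Y := X + (2 * γ) • 1)
      (hj.1.add (hermitian_smul_one _)) hγ (ν := μ + 2 * γ) (by linarith) he
      (by simp [hXe, add_smul])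
      (by
        filter_upwards [hj.2] with y hy
        simp only [qpoly, inner_zero_left, zero_add] at hy
        rw [qf_add, qf_smul_one]
        linarith)
    set c := ‖Matrix.toEuclideanCLM (𝕜 := ℝ) (X + (2 * γ) • (1 : Mat d))‖ / γ + 1 with hc
    have h1 : ∀ᶠ ε in 𝓝[>] (0 : ℝ), - (K * (1 + c * ε)) ≤ F (X + (2 * γ) • 1) := by
      filter_upwards [hev] with ε hε
      obtain ⟨x, hx, p, hp0, hp, hjp⟩ := hε
      refine le_trans ?_ (h x hx p _ hp0 hjp)
      have : K * (1 + ‖p‖) ≤ K * (1 + c * ε) := by gcongr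
      linarith
    have h2 : Tendsto (fun ε : ℝ => - (K * (1 + c * ε))) (𝓝[>] 0) (𝓝 (-K)) := by
      have h : Continuous (fun ε : ℝ => - (K * (1 + c * ε))) := by fun_prop
      have := h.tendsto 0
      simp only [mul_zero, add_zero, mul_one] at this
      exact this.mono_left nhdsWithin_le_nhds
    exact le_of_tendsto h2 h1
  have h2 : Tendsto (fun γ : ℝ => F X + Lam * (2 * γ)) (𝓝[>] 0) (𝓝 (F X)) := by
    have h : Continuous (fun γ : ℝ => F X + Lam * (2 * γ)) := by fun_prop
    have := h.tendsto 0
    simp only [mul_zero, add_zero] at this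
    exact this.mono_left nhdsWithin_le_nhds
  exact ge_of_tendsto h2 key

lemma neg_le_of_rpow_mul {t θ K a : ℝ} (ht : 0 < t) (hθ1 : -1 ≤ θ) (hθ0 : θ ≤ 0) (hK : 0 ≤ K)
    (h : -K ≤ t ^ θ * a) : - (K * (1 + t)) ≤ a := by
  have h1 : t ^ (-θ) ≤ 1 + t := by
    rcases le_total t 1 with h | h
    · have := Real.rpow_le_one ht.le h (by linarith : 0 ≤ -θ)
      linarith
    · have := Real.rpow_le_rpow_of_exponent_le h (by linarith : -θ ≤ 1)
      rw [Real.rpow_one] at this; linarith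
  have h2 : t ^ (-θ) * t ^ θ = 1 := by
    rw [← Real.rpow_add ht]; simp
  have h3 : 0 < t ^ (-θ) := Real.rpow_pos_of_pos ht _
  have h4 : a = t ^ (-θ) * (t ^ θ * a) := by rw [← mul_assoc, h2, one_mul]
  rw [h4]
  nlinarith

/-- A solution of the singular equation satisfies `|F(D²u)| ≤ K (1 + |Du|)`, with no restriction
on the gradient. -/
lemma singular_growth {Lam : ℝ} {F : Mat d → ℝ} (hF : Ell Lam F) (hF0 : F 0 = 0) {K : ℝ}
    (hK : 0 ≤ K) {θ f u : Euc d → ℝ} (hθ1 : ∀ x ∈ ball (0 : Euc d) 1, -1 ≤ θ x)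
    (hθ0 : ∀ x ∈ ball (0 : Euc d) 1, θ x ≤ 0) (hf : ∀ x ∈ ball (0 : Euc d) 1, |f x| ≤ K)
    (hu : ContinuousOn u (ball 0 1)) (hsol : ViscSol F θ f 0 u) :
    SubEq F (fun _ _ p => - (K * (1 + ‖p‖))) u (ball 0 1) ∧
    SupEq F (fun _ _ p => K * (1 + ‖p‖)) u (ball 0 1) := by
  constructor
  · refine subEq_of_ne_zero hF hF0 hK isOpen_ball hu fun x hx p X hp hj => ?_
    have h1 := hsol.1 x hx (fun y => qpoly p X (y - x)) (contDiff_qpoly p x X).contDiffAt (by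
      filter_upwards [hj.2] with y hy
      simp only [sub_self, qpoly_zero]; linarith)
      (by rwa [gradient_qpoly hj.1, zero_add])
    rw [gradient_qpoly hj.1, hessM_qpoly hj.1, zero_add] at h1
    refine neg_le_of_rpow_mul (norm_pos_iff.2 hp) (hθ1 x hx) (hθ0 x hx) hK ?_
    linarith [(abs_le.1 (hf x hx)).1]
  · rw [supEq_iff_dual]
    simp only [norm_neg]
    refine subEq_of_ne_zero hF.dual (by simp [dualF, hF0]) hK isOpen_ball hu.neg
      fun x hx p X hp hj => ?_
    have hj' := jetAbove_neg.1 hj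
    have h1 := hsol.2 x hx (fun y => qpoly (-p) (-X) (y - x))
      (contDiff_qpoly (-p) x (-X)).contDiffAt (by
      filter_upwards [hj'.2] with y hy
      simp only [sub_self, qpoly_zero]; linarith)
      (by rw [gradient_qpoly hj'.1, zero_add]; exact neg_ne_zero.2 hp)
    rw [gradient_qpoly hj'.1, hessM_qpoly hj'.1, zero_add, norm_neg] at h1
    refine neg_le_of_rpow_mul (norm_pos_iff.2 hp) (hθ1 x hx) (hθ0 x hx) hK ?_
    simp only [dualF]
    linarith [(abs_le.1 (hf x hx)).2]

end singular

/-! ### Approximation by Lipschitz solutions on the whole space -/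

section approximation
variable {d : ℕ}

/-- Sup-convolution with a steep cone: a globally Lipschitz upper approximation which satisfies the
same gradient-dependent differential inequality on a smaller ball. -/
lemma exists_upper_approx {F : Mat d → ℝ} {q : Euc d → ℝ} {u : Euc d → ℝ} {R' R A δ : ℝ}
    (hR : 0 ≤ R) (hRR : R' < R) (hδ : 0 < δ) (hu : ContinuousOn u (closedBall 0 R))
    (hA : ∀ x ∈ closedBall (0 : Euc d) R, |u x| ≤ A)
    (hsub : SubEq F (fun _ _ p => q p) u (ball 0 R)) :
    ∃ (S : Euc d → ℝ) (L : ℝ), 0 ≤ L ∧ (∀ x y, S x - S y ≤ L * ‖x - y‖) ∧ (∀ x, S x ≤ A) ∧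
      (∀ x ∈ closedBall (0 : Euc d) R, u x ≤ S x ∧ S x ≤ u x + δ) ∧
      SubEq F (fun _ _ p => q p) S (ball 0 R') := by
  have hcpt : IsCompact (closedBall (0 : Euc d) R) := isCompact_closedBall _ _
  have hne : (closedBall (0 : Euc d) R).Nonempty := ⟨0, mem_closedBall_self hR⟩
  have hA0 : 0 ≤ A := (abs_nonneg _).trans (hA 0 (mem_closedBall_self hR))
  obtain ⟨δ', hδ', huc⟩ := Metric.uniformContinuousOn_iff.1
    (hcpt.uniformContinuousOn_of_continuous hu) δ hδ
  set τ := min δ' (R - R') with hτ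
  have hτ0 : 0 < τ := lt_min hδ' (by linarith)
  set L := (2 * A + 1) / τ with hL
  have hL0 : 0 < L := by positivity
  have hex : ∀ x, ∃ y ∈ closedBall (0 : Euc d) R, ∀ z ∈ closedBall (0 : Euc d) R,
      u z - L * ‖x - z‖ ≤ u y - L * ‖x - y‖ := by
    intro x
    have hc : ContinuousOn (fun z => u z - L * ‖x - z‖) (closedBall 0 R) :=
      hu.sub (by fun_prop)
    exact hcpt.exists_isMaxOn hne hc
  choose m hm hmax using hex
  have hclose : ∀ x ∈ closedBall (0 : Euc d) R, ‖x - m x‖ < τ := by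
    intro x hx
    have h1 := hmax x x hx
    rw [sub_self, norm_zero, mul_zero, sub_zero] at h1
    have h2 := abs_le.1 (hA x hx)
    have h3 := abs_le.1 (hA _ (hm x))
    have h4 : L * ‖x - m x‖ < L * τ := by
      rw [hL, div_mul_cancel₀ _ hτ0.ne', ← hL]; linarith
    exact lt_of_mul_lt_mul_left h4 hL0.le
  refine ⟨fun x => u (m x) - L * ‖x - m x‖, L, hL0.le, fun x y => ?_, fun x => ?_,
    fun x hx => ⟨?_, ?_⟩, fun x hx p X hj => ?_⟩
  · have h1 := hmax y (m x) (hm x)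
    have h2 : ‖y - m x‖ ≤ ‖x - y‖ + ‖x - m x‖ := by
      have := norm_sub_le_norm_sub_add_norm_sub y x (m x)
      rwa [norm_sub_rev y x] at this
    have h3 := mul_le_mul_of_nonneg_left h2 hL0.le
    simp only
    linarith
  · have h1 := (abs_le.1 (hA _ (hm x))).2
    have h2 : 0 ≤ L * ‖x - m x‖ := by positivity
    simp only
    linarith
  · simpa using hmax x x hx
  · have h1 := huc _ (hm x) x hx (by
      rw [dist_comm, dist_eq_norm]
      exact (hclose x hx).trans_le (min_le_left _ _))
    rw [Real.dist_eq] at h1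
    have h2 : 0 ≤ L * ‖x - m x‖ := by positivity
    have h3 := (abs_lt.1 h1).2
    simp only
    linarith
  · have hxR : x ∈ closedBall (0 : Euc d) R := ball_subset_closedBall (ball_subset_ball hRR.le hx)
    have hmR : m x ∈ ball (0 : Euc d) R := by
      rw [mem_ball_zero_iff] at hx ⊢
      have h1 := (hclose x hxR).trans_le (min_le_right _ _)
      have h2 := norm_le_norm_add_norm_sub x (m x)
      linarith
    -- translating by `x - m x` turns a superjet of the sup-convolution at `x` into one of `u`
    refine hsub (m x) hmR p X ⟨hj.1, ?_⟩
    have ht : Tendsto (fun z => z + (x - m x)) (𝓝 (m x)) (𝓝 x) := by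
      have : Continuous (fun z => z + (x - m x)) := by fun_prop
      simpa using this.tendsto (m x)
    filter_upwards [ht.eventually hj.2, isOpen_ball.mem_nhds hmR] with z hz hzR
    have h1 := hmax (z + (x - m x)) z (ball_subset_closedBall hzR)
    rw [add_sub_cancel_left] at h1
    rw [show z + (x - m x) - x = z - m x by abel] at hz
    linarith

/-- A cutoff penalty: zero on `ball 0 r`, equal to `2A` outside `ball 0 R'`, Lipschitz and
semiconcave. -/
lemma exists_penalty {r R' A : ℝ} (hr : 0 < r) (hrR : r < R') (hA : 0 ≤ A) :
    ∃ (ψ : Euc d → ℝ) (c : ℝ), 0 ≤ c ∧ (∀ x, 0 ≤ ψ x) ∧ (∀ x ∈ ball (0 : Euc d) r, ψ x = 0) ∧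
      (∀ x ∉ ball (0 : Euc d) R', ψ x = 2 * A) ∧ (∀ x y, ψ x - ψ y ≤ c * ‖x - y‖) ∧
      ∀ x, ∃ a : Euc d, ‖a‖ ≤ c ∧ ∀ y, ψ y ≤ ψ x + ⟪a, y - x⟫ + c / 2 * ‖y - x‖ ^ 2 := by
  let b : ContDiffBump (0 : Euc d) := ⟨r, R', hr, hrR⟩
  set ψ : Euc d → ℝ := fun x => 2 * A * (1 - b x) with hψ
  have hsm : ContDiff ℝ 2 b := b.contDiff
  obtain ⟨K₁, hK₁⟩ := (hsm.of_le one_le_two).lipschitzWith_of_hasCompactSupport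
    b.hasCompactSupport one_ne_zero
  obtain ⟨K₂, hK₂⟩ := (hsm.fderiv_right (m := 1) (by norm_num)).lipschitzWith_of_hasCompactSupport
    (b.hasCompactSupport.fderiv ℝ) one_ne_zero
  have hdiff : Differentiable ℝ b := hsm.differentiable (by norm_num)
  set c : ℝ := 2 * A * K₁ + 4 * A * K₂ with hc
  have hc0 : 0 ≤ c := by positivity
  have hc1 : 2 * A * K₁ ≤ c := by
    rw [hc]; linarith [show 0 ≤ 4 * A * (K₂ : ℝ) by positivity]
  have hc2 : 4 * A * K₂ ≤ c := by
    rw [hc]; linarith [show 0 ≤ 2 * A * (K₁ : ℝ) by positivity]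
  refine ⟨ψ, c, hc0, fun x => ?_, fun x hx => ?_, fun x hx => ?_, fun x y => ?_, fun x => ?_⟩
  · have := b.le_one (x := x)
    have h2 : 0 ≤ 1 - b x := by linarith
    simp only [hψ]; positivity
  · simp [hψ, b.one_of_mem_closedBall (ball_subset_closedBall hx)]
  · have h0 : b x = 0 := by
      rw [← Function.notMem_support, b.support_eq]; exact hx
    simp [hψ, h0]
  · have h1 := hK₁.dist_le_mul y x
    rw [Real.dist_eq, dist_eq_norm, norm_sub_rev] at h1
    have h2 := (abs_le.1 h1).2
    have h3 : 2 * A * K₁ * ‖x - y‖ ≤ c * ‖x - y‖ := by gcongr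
    have h4 : 2 * A * (b y - b x) ≤ 2 * A * (K₁ * ‖x - y‖) := by gcongr
    simp only [hψ]; linarith
  · refine ⟨-(2 * A) • gradient b x, ?_, fun y => ?_⟩
    · rw [norm_smul, norm_neg, Real.norm_of_nonneg (by positivity)]
      have h1 : ‖gradient b x‖ ≤ K₁ := by
        rw [gradient, LinearIsometryEquiv.norm_map]
        exact norm_fderiv_le_of_lipschitz ℝ hK₁
      refine le_trans ?_ hc1
      gcongr
    · have h1 := (convex_closedBall x ‖y - x‖).norm_image_sub_le_of_norm_hasFDerivWithin_le'
        (f := b) (f' := fderiv ℝ b) (φ := fderiv ℝ b x) (C := K₂ * ‖y - x‖)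
        (fun z _ => (hdiff z).hasFDerivAt.hasFDerivWithinAt)
        (fun z hz => by
          have h2 := hK₂.dist_le_mul z x
          rw [dist_eq_norm] at h2
          refine h2.trans ?_
          have h3 : dist z x ≤ ‖y - x‖ := hz
          gcongr)
        (mem_closedBall_self (norm_nonneg _))
        (by rw [mem_closedBall, dist_eq_norm] : y ∈ closedBall x ‖y - x‖)
      have h2 : fderiv ℝ b x (y - x) = ⟪gradient b x, y - x⟫ := by
        rw [gradient, InnerProductSpace.toDual_symm_apply]
      rw [h2, Real.norm_eq_abs] at h1
      have h3 := (abs_le.1 h1).1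
      have h4 : 2 * A * K₂ * ‖y - x‖ ^ 2 ≤ c / 2 * ‖y - x‖ ^ 2 := by
        gcongr; linarith
      have h5 : 2 * A * (-(K₂ * ‖y - x‖ * ‖y - x‖)) ≤
          2 * A * (b y - b x - ⟪gradient b x, y - x⟫) := by gcongr
      simp only [hψ, inner_smul_left, RCLike.conj_to_real]
      nlinarith

/-- Truncation of a real number to `[-k, k]`. -/
def clampR (k t : ℝ) : ℝ := max (-k) (min k t)

lemma clampR_neg {k : ℝ} (hk : 0 ≤ k) (t : ℝ) : clampR k (-t) = - clampR k t := by
  unfold clampR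
  rcases le_total k t with h | h <;> rcases le_total (-k) t with h' | h' <;>
  rcases le_total k (-t) with h'' | h'' <;>
  grind

lemma abs_clampR {k : ℝ} (hk : 0 ≤ k) (t : ℝ) : |clampR k t| ≤ k :=
  abs_le.2 ⟨le_max_left _ _, max_le (by linarith) (min_le_left _ _)⟩

lemma clampR_mono (k : ℝ) : Monotone (clampR k) := fun _ _ h =>
  max_le_max le_rfl (min_le_min le_rfl h)

lemma continuous_clampR (k : ℝ) : Continuous (clampR k) := by unfold clampR; fun_prop

lemma clampR_nonpos {k t : ℝ} (hk : 0 ≤ k) (ht : t ≤ 0) : clampR k t ≤ 0 :=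
  max_le (by linarith) ((min_le_right _ _).trans ht)

lemma clampR_of_le {k t : ℝ} (ht : t ≤ -k) : clampR k t ≤ -k :=
  max_le le_rfl ((min_le_right _ _).trans ht)

/-- The lower barrier `max (-A) (S - η - ψ)`. Where it equals `-A` the right-hand side is
nonpositive; elsewhere the right-hand side is saturated at its minimum. -/
lemma barrier_sub {Lam : ℝ} {F : Mat d → ℝ} (hF : Ell Lam F) (hF0 : F 0 = 0)
    {K c A R' η ε : ℝ} (hK : 0 ≤ K) (hc : 0 ≤ c) (hη : 0 ≤ η) (hε : 0 < ε)
    {S ψ z : Euc d → ℝ} (hSA : ∀ x, S x ≤ A)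
    (hS : SubEq F (fun _ _ p => - (K * (1 + ‖p‖))) S (ball 0 R'))
    (hψ1 : ∀ x ∉ ball (0 : Euc d) R', ψ x = 2 * A)
    (hψ2 : ∀ x, ∃ a : Euc d, ‖a‖ ≤ c ∧ ∀ y, ψ y ≤ ψ x + ⟪a, y - x⟫ + c / 2 * ‖y - x‖ ^ 2)
    (hz1 : ∀ x, -A ≤ z x)
    (hz2 : ∀ x ∈ ball (0 : Euc d) R',
      S x - η - ψ x - z x ≤ - (ε * (K * (1 + c) + Lam * c))) :
    SubEq F (fun x r p => (1 + ‖p‖) * clampR (K * (1 + c) + Lam * c) ((r - z x) / ε))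
      (fun x => max (-A) (S x - η - ψ x)) univ := by
  have hLam := hF.nonneg
  set K' := K * (1 + c) + Lam * c with hK'
  have hK'0 : 0 ≤ K' := by positivity
  intro x _ p X hj
  rcases le_or_gt (S x - η - ψ x) (-A) with hle | hlt
  · have hval : max (-A) (S x - η - ψ x) = -A := max_eq_left hle
    have h1 : JetAbove (fun _ : Euc d => -A) x p X :=
      hj.congr_le (Eventually.of_forall fun y => le_max_left _ _) hval.symm
    have h2 := jet_compare (p' := 0) (X' := 0) (Eventually.of_forall fun y => by
      simp [qpoly, qf]) h1
    have h3 := hF.mono 0 X (by simp [Matrix.IsHermitian]) hj.1 h2.2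
    have h4 : clampR K' ((max (-A) (S x - η - ψ x) - z x) / ε) ≤ 0 := by
      refine clampR_nonpos hK'0 (div_nonpos_of_nonpos_of_nonneg ?_ hε.le)
      rw [hval]; linarith [hz1 x]
    have h5 := norm_nonneg p
    simp only
    nlinarith
  · have hval : max (-A) (S x - η - ψ x) = S x - η - ψ x := max_eq_right hlt.le
    have hxR : x ∈ ball (0 : Euc d) R' := by
      by_contra hx
      rw [hψ1 x hx] at hlt
      linarith [hSA x]
    obtain ⟨a, ha, hψa⟩ := hψ2 x
    have h1 : JetAbove S x (p + a) (X + c • 1) := by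
      refine ⟨hj.1.add (hermitian_smul_one _), ?_⟩
      filter_upwards [hj.2] with y hy
      simp only [hval] at hy
      have h2 := (le_max_right (-A) (S y - η - ψ y)).trans hy
      rw [qpoly_add_smul_one]
      simp only [qpoly, inner_add_left] at h2 ⊢
      linarith [hψa y]
    have h2 := hS x hxR _ _ h1
    have h3 := hF.lip X c hj.1 hc
    have h4 : K * (1 + ‖p + a‖) ≤ K * (1 + (‖p‖ + c)) := by
      have := norm_add_le p a
      gcongr; linarith
    have h5 : clampR K' ((max (-A) (S x - η - ψ x) - z x) / ε) ≤ -K' := by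
      refine clampR_of_le ?_
      rw [hval, div_le_iff₀ hε]
      linarith [hz2 x hxR]
    have h6 := norm_nonneg p
    have h7 : (1 + ‖p‖) * clampR K' ((max (-A) (S x - η - ψ x) - z x) / ε) ≤
        (1 + ‖p‖) * (-K') := by gcongr
    have h8 : (1 + ‖p‖) * K' = K * (1 + (‖p‖ + c)) + Lam * c + (K * c + Lam * c) * ‖p‖ := by
      rw [hK']; ring
    have h9 : 0 ≤ (K * c + Lam * c) * ‖p‖ := by positivity
    simp only
    linarith

end approximation

section main
variable {d : ℕ}

/-- The upper barrier, obtained from `barrier_sub` by duality. -/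
lemma barrier_sup {Lam : ℝ} {F : Mat d → ℝ} (hF : Ell Lam F) (hF0 : F 0 = 0)
    {K c A R' η ε : ℝ} (hK : 0 ≤ K) (hc : 0 ≤ c) (hη : 0 ≤ η) (hε : 0 < ε)
    {T ψ z : Euc d → ℝ} (hTA : ∀ x, T x ≤ A)
    (hT : SubEq (dualF F) (fun _ _ p => - (K * (1 + ‖p‖))) T (ball 0 R'))
    (hψ1 : ∀ x ∉ ball (0 : Euc d) R', ψ x = 2 * A)
    (hψ2 : ∀ x, ∃ a : Euc d, ‖a‖ ≤ c ∧ ∀ y, ψ y ≤ ψ x + ⟪a, y - x⟫ + c / 2 * ‖y - x‖ ^ 2)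
    (hz1 : ∀ x, z x ≤ A)
    (hz2 : ∀ x ∈ ball (0 : Euc d) R',
      T x - η - ψ x + z x ≤ - (ε * (K * (1 + c) + Lam * c))) :
    SupEq F (fun x r p => (1 + ‖p‖) * clampR (K * (1 + c) + Lam * c) ((r - z x) / ε))
      (fun x => - max (-A) (T x - η - ψ x)) univ := by
  have hLam := hF.nonneg
  have hK'0 : 0 ≤ K * (1 + c) + Lam * c := by positivity
  rw [supEq_iff_dual]
  have h := barrier_sub hF.dual (by simp [dualF, hF0]) hK hc hη hε hTA hT hψ1 hψ2
    (z := fun x => - z x) (fun x => by linarith [hz1 x])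
    (fun x hx => by linarith [hz2 x hx])
  have e : ∀ (x : Euc d) (r : ℝ) (p : Euc d),
      -((1 + ‖-p‖) * clampR (K * (1 + c) + Lam * c) ((-r - z x) / ε)) =
        (1 + ‖p‖) * clampR (K * (1 + c) + Lam * c) ((r - -z x) / ε) := by
    intro x r p
    rw [norm_neg, show (-r - z x) / ε = -((r - -z x) / ε) by ring, clampR_neg hK'0]
    ring
  simpa only [e, neg_neg] using h

/-- On `ball 0 r`, a function with `|F(D²u)| ≤ K (1 + |Du|)` is approximated uniformly by bounded
Lipschitz solutions, on the whole space, of `F(D²w) = (1 + |Dw|) h` with `h` continuous, where the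
bounds on `w` and `h` do not depend on the precision. -/
lemma exists_approx {Lam : ℝ} {F : Mat d → ℝ} (hF : Ell Lam F) (hF0 : F 0 = 0) {K : ℝ}
    (hK : 0 ≤ K) {u : Euc d → ℝ} (hu : ContinuousOn u (ball 0 1))
    (hsub : SubEq F (fun _ _ p => - (K * (1 + ‖p‖))) u (ball 0 1))
    (hsup : SupEq F (fun _ _ p => K * (1 + ‖p‖)) u (ball 0 1))
    {r : ℝ} (hr0 : 0 < r) (hr1 : r < 1) :
    ∃ A K' : ℝ, 0 ≤ A ∧ 0 ≤ K' ∧ ∀ η > 0, ∃ (w h : Euc d → ℝ) (L : ℝ),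
      (∀ x y, w x - w y ≤ L * ‖x - y‖) ∧ (∀ x, |w x| ≤ A) ∧ Continuous h ∧
      (∀ x, |h x| ≤ K') ∧
      SubEq F (fun x _ p => (1 + ‖p‖) * h x) w univ ∧
      SupEq F (fun x _ p => (1 + ‖p‖) * h x) w univ ∧
      ∀ x ∈ ball (0 : Euc d) r, |w x - u x| ≤ η := by
  obtain ⟨R', hrR', hR'1⟩ := exists_between hr1
  obtain ⟨R, hRR, hR1⟩ := exists_between hR'1
  have hR0 : 0 ≤ R := by linarith
  have hsubset : closedBall (0 : Euc d) R ⊆ ball 0 1 := closedBall_subset_ball hR1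
  have huR : ContinuousOn u (closedBall 0 R) := hu.mono hsubset
  obtain ⟨A, hA⟩ := (isCompact_closedBall (0 : Euc d) R).exists_bound_of_continuousOn huR
  simp only [Real.norm_eq_abs] at hA
  have hA0 : 0 ≤ A := (abs_nonneg _).trans (hA 0 (mem_closedBall_self hR0))
  obtain ⟨ψ, c, hc, hψ0, hψr, hψR, hψL, hψ2⟩ := exists_penalty (d := d) hr0 hrR' hA0
  have hLam := hF.nonneg
  set K' := K * (1 + c) + Lam * c with hK'
  have hK'0 : 0 ≤ K' := by positivity
  refine ⟨A, K', hA0, hK'0, fun η hη => ?_⟩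
  obtain ⟨S, L₁, hL₁, hSL, hSA, hSu, hSsub⟩ := exists_upper_approx (δ := η / 4) hR0 hRR
    (by positivity) huR hA (q := fun p => - (K * (1 + ‖p‖)))
    (fun x hx => hsub x (hsubset (ball_subset_closedBall hx)))
  have hsup' := supEq_iff_dual.1 hsup
  simp only [norm_neg] at hsup'
  obtain ⟨T, L₂, hL₂, hTL, hTA, hTu, hTsub⟩ := exists_upper_approx (u := fun y => - u y)
    (δ := η / 4) hR0 hRR (by positivity) huR.neg (by simpa using hA)
    (q := fun p => - (K * (1 + ‖p‖)))
    (fun x hx => hsup' x (hsubset (ball_subset_closedBall hx)))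
  set ε := η / (2 * (K' + 1)) with hε
  have hε0 : 0 < ε := by positivity
  have hεK : ε * K' ≤ η / 2 := by
    rw [hε, div_mul_eq_mul_div, div_le_div_iff₀ (by positivity) (by positivity)]
    nlinarith
  have hεK0 : 0 ≤ ε * K' := by positivity
  set z : Euc d → ℝ := fun x => max (-A) (S x) with hz
  set L := max L₁ (L₂ + c) with hL
  have hLL₁ : L₁ ≤ L := le_max_left _ _
  have hLL₂ : L₂ + c ≤ L := le_max_right _ _
  have hL0 : 0 ≤ L := hL₁.trans hLL₁
  have hzL : ∀ x y, z x - z y ≤ L * ‖x - y‖ := by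
    intro x y
    have h1 := hSL x y
    have h2 : L₁ * ‖x - y‖ ≤ L * ‖x - y‖ := by gcongr
    have h3 : 0 ≤ L * ‖x - y‖ := by positivity
    rw [sub_le_iff_le_add']
    refine max_le ?_ ?_
    · linarith [le_max_left (-A) (S y)]
    · linarith [le_max_right (-A) (S y)]
  have hVL : ∀ x y, -max (-A) (T x - η - ψ x) - -max (-A) (T y - η - ψ y) ≤ L * ‖x - y‖ := by
    intro x y
    have h1 := hTL y x
    have h1' := hψL x y
    rw [norm_sub_rev] at h1
    have h2 : (L₂ + c) * ‖x - y‖ ≤ L * ‖x - y‖ := by gcongr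
    have h3 : 0 ≤ L * ‖x - y‖ := by positivity
    have h4 : max (-A) (T y - η - ψ y) ≤ max (-A) (T x - η - ψ x) + L * ‖x - y‖ := by
      refine max_le ?_ ?_
      · linarith [le_max_left (-A) (T x - η - ψ x)]
      · linarith [le_max_right (-A) (T x - η - ψ x)]
    linarith
  have hzc : Continuous z := continuous_of_lip hzL
  have hSc : Continuous S := continuous_of_lip hSL
  have hψc : Continuous ψ := continuous_of_lip hψL
  have hzA : ∀ x, z x ≤ A := fun x => max_le (by linarith) (hSA x)
  -- on the larger ball the upper and lower approximations differ by at most `η / 2`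
  have hST : ∀ x ∈ closedBall (0 : Euc d) R, S x + T x ≤ η / 2 := fun x hx => by
    linarith [(hSu x hx).2, (hTu x hx).2]
  have hR'R : ∀ x ∈ ball (0 : Euc d) R', x ∈ closedBall (0 : Euc d) R := fun x hx =>
    ball_subset_closedBall (ball_subset_ball hRR.le hx)
  have hclc := continuous_clampR K'
  have hUs := barrier_sub hF hF0 hK hc hη.le hε0 hSA hSsub hψR hψ2 (z := z)
    (fun x => le_max_left _ _)
    (fun x _ => by linarith [le_max_right (-A) (S x), hψ0 x])
  have hVs := barrier_sup hF hF0 hK hc hη.le hε0 hTA hTsub hψR hψ2 (z := z) hzA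
    (fun x hx => by
      have h1 : z x ≤ η / 2 - T x :=
        max_le (by linarith [hTA x]) (by linarith [hST x (hR'R x hx)])
      linarith [hψ0 x])
  obtain ⟨w, hwL, hUw, hwV, hw1, hw2⟩ := perron hF
    (Q := fun x s p => (1 + ‖p‖) * clampR K' ((s - z x) / ε)) (L := L)
    (U := fun x => max (-A) (S x - η - ψ x)) (V := fun x => - max (-A) (T x - η - ψ x))
    (by fun_prop)
    (fun x p s s' hs => by
      have := clampR_mono K' (show (s - z x) / ε ≤ (s' - z x) / ε by gcongr)
      gcongr)
    (fun x h s p => by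
      have h1 := hzL (x + h) x
      rw [add_sub_cancel_left] at h1
      have := clampR_mono K' (show (s - z x) / ε ≤ (s + L * ‖h‖ - z (x + h)) / ε by
        gcongr ?_ / ε; linarith)
      gcongr)
    hVL (by fun_prop) (continuous_of_lip hVL)
    (fun x => by
      have h1 := hψ0 x
      have h2 := hSA x
      have h3 := hTA x
      have h4 : S x - η - ψ x ≤ - (T x - η - ψ x) := by
        by_cases hx : x ∈ ball (0 : Euc d) R'
        · linarith [hST x (hR'R x hx)]
        · have := hψR x hx
          linarith
      have h5 : max (-A) (T x - η - ψ x) ≤ - max (-A) (S x - η - ψ x) := by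
        refine max_le (neg_le_neg (max_le (by linarith) (by linarith))) ?_
        rw [le_neg]
        exact max_le (by linarith) (by linarith)
      linarith)
    hUs hVs
  refine ⟨w, fun x => clampR K' ((w x - z x) / ε), L, hwL, fun x => ?_, ?_,
    fun x => abs_clampR hK'0 _, hw1, hw2, fun x hx => ?_⟩
  · rw [abs_le]
    refine ⟨(le_max_left _ _).trans (hUw x), (hwV x).trans ?_⟩
    linarith [le_max_left (-A) (T x - η - ψ x)]
  · have := continuous_of_lip hwL
    fun_prop
  · have hxR : x ∈ closedBall (0 : Euc d) R := hR'R x (ball_subset_ball hrR'.le hx)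
    have h1 := (le_max_right (-A) (S x - η - ψ x)).trans (hUw x)
    have h2 := hwV x
    have h3 := le_max_right (-A) (T x - η - ψ x)
    have h4 := (hSu x hxR).1
    have h5 := (hTu x hxR).1
    rw [hψr x hx] at h1 h2 h3
    rw [abs_le]
    constructor <;> linarith

/-- `C^{1,β}` regularity on `ball 0 r` for functions with `|F(D²u)| ≤ K (1 + |Du|)`. -/
lemma local_estimate {Lam : ℝ} {F : Mat d → ℝ} (hF : Ell Lam F) (hF0 : F 0 = 0) {β C : ℝ}
    (hβ : 0 < β) (hC : 0 < C) (hR : Reg F β C) {K : ℝ}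
    (hK : 0 ≤ K) {u : Euc d → ℝ} (hu : ContinuousOn u (ball 0 1))
    (hsub : SubEq F (fun _ _ p => - (K * (1 + ‖p‖))) u (ball 0 1))
    (hsup : SupEq F (fun _ _ p => K * (1 + ‖p‖)) u (ball 0 1))
    {r : ℝ} (hr0 : 0 < r) (hr1 : r < 1) :
    ∃ N : ℝ, 0 ≤ N ∧ (∀ y ∈ ball (0 : Euc d) r, HasGradientAt u (gradient u y) y) ∧
      ∀ x ∈ ball (0 : Euc d) r, ∀ y ∈ ball (0 : Euc d) r,
        ‖gradient u x - gradient u y‖ ≤ N * ‖x - y‖ ^ β := by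
  obtain ⟨A, K', hA, hK', happ⟩ := exists_approx hF hF0 hK hu hsub hsup hr0 hr1
  obtain ⟨M, N, hN, hest⟩ := global_estimate hF hβ hC hR hA hK'
  have hε : ∀ n : ℕ, (0 : ℝ) < 1 / ((n : ℝ) + 1) := fun n => by positivity
  choose w h L hwL hwA hhc hhK hw1 hw2 hwu using fun n : ℕ => happ _ (hε n)
  have hall := fun n => hest (w n) (h n) (L n) (hwL n) (hwA n) (hhc n) (hhK n) (hw1 n) (hw2 n)
  have hM : 0 ≤ M := (norm_nonneg _).trans ((hall 0).2.1 0)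
  set N' := N + 2 * M * 2 ^ β with hN'
  have hN'0 : 0 ≤ N' := by positivity
  have hhol : ∀ n x y, ‖gradient (w n) x - gradient (w n) y‖ ≤ N' * ‖x - y‖ ^ β := by
    intro n x y
    obtain ⟨-, h2, h3⟩ := hall n
    have hp : 0 ≤ ‖x - y‖ ^ β := by positivity
    rcases lt_or_ge ‖x - y‖ (1 / 2) with hlt | hge
    · refine (h3 x x (mem_ball_self (by norm_num)) y
        (by rwa [mem_ball, dist_comm, dist_eq_norm])).trans ?_
      have : N ≤ N' := by rw [hN']; linarith [show 0 ≤ 2 * M * 2 ^ β by positivity]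
      gcongr
    · have h4 : ‖gradient (w n) x - gradient (w n) y‖ ≤ 2 * M :=
        (norm_sub_le _ _).trans (by linarith [h2 x, h2 y])
      have h5 : 1 ≤ 2 ^ β * ‖x - y‖ ^ β := by
        rw [← Real.mul_rpow (by norm_num) (norm_nonneg _)]
        exact Real.one_le_rpow (by linarith) hβ.le
      have h6 : 2 * M * 1 ≤ 2 * M * (2 ^ β * ‖x - y‖ ^ β) := by gcongr
      have h7 : 0 ≤ N * ‖x - y‖ ^ β := by positivity
      rw [hN', add_mul]
      linarith
  obtain ⟨D, hD1, hD2⟩ := gradient_limit (c := 0) (r := r) (u := u) hβ hN'0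
    (fun n => gradient (w n)) (fun n y _ => (hall n).1 y) (fun n y _ => (hall n).2.1 y)
    (fun n x _ y _ => hhol n x y) (fun y hy => by
      rw [tendsto_iff_norm_sub_tendsto_zero]
      exact squeeze_zero (fun _ => norm_nonneg _) (fun n => hwu n y hy)
        tendsto_one_div_add_atTop_nhds_zero_nat)
  refine ⟨N', hN'0, fun y hy => ?_, fun x hx y hy => ?_⟩
  · rw [(hD1 y hy).1.gradient]; exact (hD1 y hy).1
  · rw [(hD1 x hx).1.gradient, (hD1 y hy).1.gradient]
    exact hD2 x hx y hy

end main

/-- the purely singular case (Corollary 7.1). -/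
theorem statement4
    (d : ℕ) (hd : 1 ≤ d) (lam Lam : ℝ) (hlam : 0 < lam) (hlL : lam ≤ Lam)
    (F : Mat d → ℝ) (hF : UniformlyElliptic lam Lam F)
    (α : ℝ) (hα : α ∈ Set.Ioo (0:ℝ) 1)
    (hreg : ∀ β ∈ Set.Ioo (0:ℝ) α, ∃ Cβ > (0:ℝ),
      ∀ (g : Euc d → ℝ), ContinuousOn g (ball 0 1) →
        (∃ K, ∀ x ∈ ball (0 : Euc d) 1, |g x| ≤ K) →
      ∀ w : Euc d → ℝ, ContinuousOn w (ball 0 1) →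
        ViscSolPure F g w (ball 0 1) →
      ∃ Dw : Euc d → Euc d,
        (∀ y ∈ ball (0 : Euc d) (1/2), HasGradientAt w (Dw y) y) ∧
        ∀ Kw Kg : ℝ, (∀ x ∈ ball (0 : Euc d) 1, |w x| ≤ Kw) →
          (∀ x ∈ ball (0 : Euc d) 1, |g x| ≤ Kg) →
          (∀ x ∈ ball (0 : Euc d) (1/2), |w x| + ‖Dw x‖ ≤ Cβ * (Kw + Kg)) ∧
          ∀ x ∈ ball (0 : Euc d) (1/2), ∀ y ∈ ball (0 : Euc d) (1/2),
            ‖Dw x - Dw y‖ ≤ Cβ * (Kw + Kg) * ‖x - y‖ ^ β)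
    (θ : Euc d → ℝ) (hθ : ContinuousOn θ (closedBall 0 1))
    (hθinf : -1 < sInf (θ '' ball (0 : Euc d) 1))
    (hθneg : ∀ x ∈ ball (0 : Euc d) 1, θ x ≤ 0)
    (f : Euc d → ℝ) (hf : ContinuousOn f (ball 0 1))
    (hfb : ∃ K, ∀ x ∈ ball (0 : Euc d) 1, |f x| ≤ K)
    (u : Euc d → ℝ) (hu : ContinuousOn u (ball 0 1))
    (husol : ViscSol F θ f 0 u) :
    ∀ β : ℝ, 0 < β → β < α →
      ∃ Du : Euc d → Euc d,
        (∀ y ∈ ball (0 : Euc d) 1, HasGradientAt u (Du y) y) ∧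
        ∀ K : Set (Euc d), IsCompact K → K ⊆ ball 0 1 →
          ∃ C > 0, ∀ x ∈ K, ∀ y ∈ K, ‖Du x - Du y‖ ≤ C * ‖x - y‖ ^ β := by
  intro β hβ0 hβα
  obtain ⟨C, hC, hR⟩ := hreg β ⟨hβ0, hβα⟩
  have hR' : Reg F β C := hR
  have hE := hF.ell hlam hlL
  obtain ⟨K₀, hK₀⟩ := hfb
  have hK : 0 ≤ K₀ := (abs_nonneg _).trans (hK₀ 0 (mem_ball_self one_pos))
  have hbdd : BddBelow (θ '' ball (0 : Euc d) 1) :=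
    ((isCompact_closedBall (0 : Euc d) 1).image_of_continuousOn hθ).bddBelow.mono
      (image_mono ball_subset_closedBall)
  have hθ1 : ∀ x ∈ ball (0 : Euc d) 1, -1 ≤ θ x := fun x hx =>
    hθinf.le.trans (csInf_le hbdd ⟨x, hx, rfl⟩)
  obtain ⟨hsub, hsup⟩ := singular_growth hE hF.1 hK hθ1 hθneg hK₀ hu husol
  have hloc := fun (r : ℝ) (hr0 : 0 < r) (hr1 : r < 1) =>
    local_estimate hE hF.1 hβ0 hC hR' hK hu hsub hsup hr0 hr1
  refine ⟨gradient u, fun y hy => ?_, fun S hS hSb => ?_⟩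
  · rw [mem_ball_zero_iff] at hy
    obtain ⟨r, hr, hr1⟩ := exists_between hy
    obtain ⟨N, -, h, -⟩ := hloc r ((norm_nonneg y).trans_lt hr) hr1
    exact h y (mem_ball_zero_iff.2 hr)
  · obtain ⟨r, hr, hSr⟩ := exists_lt_subset_ball hS.isClosed hSb
    obtain ⟨N, hN, -, h⟩ := hloc (max r (1 / 2)) (lt_max_of_lt_right (by norm_num))
      (max_lt hr (by norm_num))
    have hSr' := hSr.trans (ball_subset_ball (le_max_left r (1 / 2)))
    refine ⟨N + 1, by linarith, fun x hx y hy => (h x (hSr' hx) y (hSr' hy)).trans ?_⟩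
    gcongr
    linarith

end
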